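/- (Kim–Lee.) As n → ∞, p_σ(n+1) = (2π/(n√23)) · I₂(4π√n/√23) + O(n^{−1/2} · I₂(2π√n/√23)); that is, the function n ↦ p_σ(n+1) − (2π/(n√23))·I₂(4π√n/√23) is big-O of n ↦ n^{−1/2}·I₂(2π√n/√23) along n → ∞. -/

import Mathlib

open Filter Asymptotics

/-- `p n` is the classical partition function: the number of partitions of `n`. -/
def p (n : ℕ) : ℕ := Fintype.card (Nat.Partition n)

/-- `pSigma n = ∑_{j ≥ 0, 23j ≤ n} p(n − 23j)·p(j)`, the Fourier coefficients in
`q·η(z)⁻¹η(23z)⁻¹ = ∑_{n≥0} pSigma(n)qⁿ`. -/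
def pSigma (n : ℕ) : ℕ := ∑ j ∈ Finset.range (n / 23 + 1), p (n - 23 * j) * p j

/-- The modified Bessel function of the first kind of order 2, defined by its convergent
power series `I₂(x) = ∑_{m=0}^{∞} (x/2)^{2m+2} / (m!·(m+2)!)`. -/
noncomputable def I2 (x : ℝ) : ℝ :=
  ∑' m : ℕ, (x / 2) ^ (2 * m + 2) / ((m.factorial : ℝ) * ((m + 2).factorial : ℝ))

/-!
By Cauchy's formula, `p_σ(n+1)` is the integral of `1 / (η(z)η(23z))` times `e^{-2πinz}` over a
horizontal segment of length one at height `y`. At the cusp `0` the Fricke involution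
`z ↦ -1/(23z)` turns the `q`-expansion of this weight `-1` form into the polar part
`-i√23 · z · e^{2πi/(23z)}`. Up to `O(e^{2πny})`, the segment integral of the polar part is an
integral over a full circle around `0`, and expanding the exponentials identifies that with the
Bessel main term.

For the remainder take `y = 1/(2√23√n)`. Away from `0` the largest singularities are those at
`±1/2`. There the exponent is at most `1/4` of the one at `0`, and the Gaussian decay of
`exp(Ay/(u²+y²))` in `u` yields a factor `y^{3/2}`. This gives `O(n^{-3/4} e^{2π√n/√23})`, the size
of `n^{-1/2} I₂(2π√n/√23)`.
-/

open scoped PowerSeries.WithPiTopology Real UpperHalfPlane MatrixGroups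

local notation "𝕢" => Function.Periodic.qParam

section PartitionSeries

lemma powerSeriesMk_card_restricted_le (R : Type*) [CommRing R] (N : ℕ) :
    PowerSeries.mk (fun n ↦ ((Nat.Partition.restricted n (· ≤ N)).card : R)) =
      ∏ i ∈ Finset.range N, (PowerSeries.mk 1).expand (i + 1) i.succ_ne_zero := by
  let _ : TopologicalSpace R := ⊥
  have _ : DiscreteTopology R := ⟨rfl⟩
  have geom (i : ℕ) : ∑' j : ℕ, (PowerSeries.X : PowerSeries R) ^ ((i + 1) * j) =
      (PowerSeries.mk 1).expand (i + 1) i.succ_ne_zero := by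
    simp_rw [pow_mul]
    refine left_inv_eq_right_inv
      (PowerSeries.WithPiTopology.tsum_pow_mul_one_sub_of_constantCoeff_eq_zero (by simp)) ?_
    have h := congrArg (PowerSeries.expand (i + 1) i.succ_ne_zero)
      (PowerSeries.mk_one_mul_one_sub_eq_one R)
    rwa [map_mul, map_sub, map_one, PowerSeries.expand_X, mul_comm] at h
  rw [Nat.Partition.powerSeriesMk_card_restricted_eq_tprod, tprod_eq_prod (s := Finset.range N)]
  · refine Finset.prod_congr rfl fun i hi ↦ ?_
    rw [if_pos (Nat.succ_le_of_lt (Finset.mem_range.1 hi)), geom]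
  · intro i hi
    exact if_neg fun h ↦ hi (Finset.mem_range.2 h)

lemma card_restricted_le_eq_p {n N : ℕ} (h : n ≤ N) :
    (Nat.Partition.restricted n (· ≤ N)).card = p n := by
  rw [p, ← Finset.card_univ, Nat.Partition.restricted, Finset.filter_true_of_mem]
  exact fun x _ i hi ↦ (Nat.Partition.le_of_mem_parts hi).trans h

lemma card_restricted_le_p (n N : ℕ) : (Nat.Partition.restricted n (· ≤ N)).card ≤ p n :=
  Finset.card_le_univ _

variable {φ ψ : PowerSeries ℂ} {q s t : ℂ}

lemma hasSum_coeff_mul (hφ : HasSum (fun n ↦ φ.coeff n * q ^ n) s)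
    (hψ : HasSum (fun n ↦ ψ.coeff n * q ^ n) t) :
    HasSum (fun n ↦ (φ * ψ).coeff n * q ^ n) (s * t) := by
  have hcoeff (n : ℕ) : (φ * ψ).coeff n * q ^ n = ∑ kl ∈ Finset.HasAntidiagonal.antidiagonal n,
      φ.coeff kl.1 * q ^ kl.1 * (ψ.coeff kl.2 * q ^ kl.2) := by
    rw [PowerSeries.coeff_mul, Finset.sum_mul]
    refine Finset.sum_congr rfl fun kl hkl ↦ ?_
    rw [← Finset.HasAntidiagonal.mem_antidiagonal.1 hkl, pow_add]
    ring
  have hφ' := summable_norm_iff.2 hφ.summable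
  have hψ' := summable_norm_iff.2 hψ.summable
  simp_rw [hcoeff, ← hφ.tsum_eq, ← hψ.tsum_eq,
    tsum_mul_tsum_eq_tsum_sum_antidiagonal_of_summable_norm hφ' hψ']
  exact (summable_norm_sum_mul_antidiagonal_of_summable_norm hφ' hψ').of_norm.hasSum

lemma hasSum_coeff_prod {ι : Type*} (S : Finset ι) {φ : ι → PowerSeries ℂ} {s : ι → ℂ}
    (h : ∀ i, HasSum (fun n ↦ (φ i).coeff n * q ^ n) (s i)) :
    HasSum (fun n ↦ (∏ i ∈ S, φ i).coeff n * q ^ n) (∏ i ∈ S, s i) := by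
  classical
  induction S using Finset.induction_on with
  | empty =>
    simpa using hasSum_single (f := fun n ↦ (1 : PowerSeries ℂ).coeff n * q ^ n) 0
      fun n hn ↦ by simp [PowerSeries.coeff_one, hn]
  | insert i S hi ih =>
    simpa only [Finset.prod_insert hi] using hasSum_coeff_mul (h i) ih

lemma hasSum_coeff_expand {N : ℕ} (hN : N ≠ 0)
    (hφ : HasSum (fun n ↦ φ.coeff n * (q ^ N) ^ n) s) :
    HasSum (fun n ↦ (φ.expand N hN).coeff n * q ^ n) s := by
  rw [← (mul_right_injective₀ hN).hasSum_iff]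
  · simpa only [Function.comp_def, PowerSeries.coeff_expand_mul, pow_mul] using hφ
  · intro n hn
    have hdvd : ¬ N ∣ n := fun ⟨k, hk⟩ ↦ hn ⟨k, hk.symm⟩
    rw [PowerSeries.coeff_expand_of_not_dvd N hN φ hdvd, zero_mul]

lemma hasSum_card_restricted_le (hq : ‖q‖ < 1) (N : ℕ) :
    HasSum (fun n ↦ ((Nat.Partition.restricted n (· ≤ N)).card : ℂ) * q ^ n)
      (∏ i ∈ Finset.range N, (1 - q ^ (i + 1)))⁻¹ := by
  have hgeom (i : ℕ) : HasSum (fun n ↦ ((PowerSeries.mk (1 : ℕ → ℂ)).expand (i + 1)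
      i.succ_ne_zero).coeff n * q ^ n) (1 - q ^ (i + 1))⁻¹ := by
    refine hasSum_coeff_expand _ ?_
    have hlt : ‖q ^ (i + 1)‖ < 1 := by
      simpa using pow_lt_one₀ (norm_nonneg q) hq i.succ_ne_zero
    simpa using hasSum_geometric_of_norm_lt_one hlt
  have h := hasSum_coeff_prod (Finset.range N) hgeom
  simpa only [← powerSeriesMk_card_restricted_le, PowerSeries.coeff_mk,
    Finset.prod_inv_distrib] using h

lemma tprod_one_sub_pow_ne_zero (hq : ‖q‖ < 1) : ∏' i : ℕ, (1 - q ^ (i + 1)) ≠ 0 := by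
  simp_rw [sub_eq_add_neg]
  refine tprod_one_add_ne_zero_of_summable (fun i h ↦ ?_) ?_
  · have hlt : ‖q ^ (i + 1)‖ < 1 := by
      simpa using pow_lt_one₀ (norm_nonneg q) hq i.succ_ne_zero
    rw [show q ^ (i + 1) = 1 by linear_combination -h, norm_one] at hlt
    exact lt_irrefl _ hlt
  · simpa using! (summable_nat_add_iff 1).2 (summable_geometric_of_lt_one (norm_nonneg q) hq)

lemma tendsto_inv_prod_one_sub_pow (hq : ‖q‖ < 1) :
    Tendsto (fun N ↦ (∏ i ∈ Finset.range N, (1 - q ^ (i + 1)))⁻¹) atTop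
      (nhds (∏' i : ℕ, (1 - q ^ (i + 1)))⁻¹) :=
  (ModularForm.multipliable_one_sub_pow hq).hasProd.tendsto_prod_nat.inv₀
    (tprod_one_sub_pow_ne_zero hq)

lemma summable_norm_p_mul_pow (hq : ‖q‖ < 1) : Summable fun n ↦ ‖(p n : ℂ) * q ^ n‖ := by
  have hr : ‖((‖q‖ : ℝ) : ℂ)‖ < 1 := by simpa using hq
  obtain ⟨B, hB⟩ := (tendsto_inv_prod_one_sub_pow hr).norm.bddAbove_range
  refine summable_of_sum_range_le (c := B) (fun n ↦ norm_nonneg _) fun M ↦ ?_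
  have hM := hasSum_card_restricted_le hr M
  have hreal : HasSum (fun n ↦ ((Nat.Partition.restricted n (· ≤ M)).card : ℝ) * ‖q‖ ^ n)
      (∏ i ∈ Finset.range M, (1 - ‖q‖ ^ (i + 1)))⁻¹ := by
    exact_mod_cast hM
  calc ∑ n ∈ Finset.range M, ‖(p n : ℂ) * q ^ n‖
      = ∑ n ∈ Finset.range M,
          ((Nat.Partition.restricted n (· ≤ M)).card : ℝ) * ‖q‖ ^ n := by
        refine Finset.sum_congr rfl fun n hn ↦ ?_
        rw [card_restricted_le_eq_p (Finset.mem_range.1 hn).le]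
        simp
    _ ≤ (∏ i ∈ Finset.range M, (1 - ‖q‖ ^ (i + 1)))⁻¹ :=
        sum_le_hasSum _ (fun n _ ↦ by positivity) hreal
    _ ≤ ‖(∏ i ∈ Finset.range M, (1 - ((‖q‖ : ℝ) : ℂ) ^ (i + 1)))⁻¹‖ := by
        rw [← Complex.ofReal_one]
        simp_rw [← Complex.ofReal_pow, ← Complex.ofReal_sub]
        rw [← Complex.ofReal_prod, ← Complex.ofReal_inv, Complex.norm_real]
        exact le_abs_self _
    _ ≤ B := hB ⟨M, rfl⟩

lemma hasSum_p_mul_pow (hq : ‖q‖ < 1) :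
    HasSum (fun n ↦ (p n : ℂ) * q ^ n) (∏' i : ℕ, (1 - q ^ (i + 1)))⁻¹ := by
  have hlim : Tendsto (fun N ↦ ∑' n, ((Nat.Partition.restricted n (· ≤ N)).card : ℂ) * q ^ n)
      atTop (nhds (∑' n, (p n : ℂ) * q ^ n)) := by
    refine tendsto_tsum_of_dominated_convergence (summable_norm_p_mul_pow hq) (fun n ↦ ?_)
      (.of_forall fun N n ↦ ?_)
    · refine tendsto_const_nhds.congr' ?_
      filter_upwards [eventually_ge_atTop n] with N hN
      rw [card_restricted_le_eq_p hN]
    · rw [norm_mul, norm_mul, Complex.norm_natCast, Complex.norm_natCast]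
      gcongr
      exact card_restricted_le_p n N
  simp_rw [(hasSum_card_restricted_le hq _).tsum_eq] at hlim
  rw [← tendsto_nhds_unique hlim (tendsto_inv_prod_one_sub_pow hq)]
  exact (summable_norm_p_mul_pow hq).of_norm.hasSum

lemma coeff_mul_expand {R : Type*} [CommRing R] (φ ψ : PowerSeries R) {N : ℕ} (hN : N ≠ 0)
    (n : ℕ) : (φ * ψ.expand N hN).coeff n =
      ∑ j ∈ Finset.range (n / N + 1), φ.coeff (n - N * j) * ψ.coeff j := by
  rw [mul_comm, PowerSeries.coeff_mul,
    Finset.Nat.sum_antidiagonal_eq_sum_range_succ fun k l ↦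
      (ψ.expand N hN).coeff k * φ.coeff l]
  symm
  refine Finset.sum_of_injOn (fun j ↦ N * j) (mul_right_injective₀ hN).injOn ?_ ?_ ?_
  · intro j hj
    simp only [Finset.coe_range, Set.mem_Iio, Nat.lt_succ_iff] at hj ⊢
    exact (Nat.mul_le_mul_left N hj).trans (Nat.mul_div_le n N)
  · intro k hk hk'
    rw [PowerSeries.coeff_expand_of_not_dvd N hN, zero_mul]
    rintro ⟨j, rfl⟩
    refine hk' ⟨j, ?_, rfl⟩
    simp only [Finset.coe_range, Set.mem_Iio, Finset.mem_range, Nat.lt_succ_iff] at hk ⊢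
    exact (Nat.le_div_iff_mul_le (Nat.pos_of_ne_zero hN)).2 (by rwa [mul_comm])
  · intro j _
    rw [PowerSeries.coeff_expand_mul, mul_comm]

lemma hasSum_pSigma_mul_pow (hq : ‖q‖ < 1) :
    HasSum (fun n ↦ (pSigma n : ℂ) * q ^ n)
      ((∏' i : ℕ, (1 - q ^ (i + 1))) * ∏' i : ℕ, (1 - (q ^ 23) ^ (i + 1)))⁻¹ := by
  have hq' : ‖q ^ 23‖ < 1 := by simpa using pow_lt_one₀ (norm_nonneg q) hq (by norm_num)
  have hp {q : ℂ} (hq : ‖q‖ < 1) :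
      HasSum (fun n ↦ (PowerSeries.mk fun n ↦ (p n : ℂ)).coeff n * q ^ n)
        (∏' i : ℕ, (1 - q ^ (i + 1)))⁻¹ := by
    simpa only [PowerSeries.coeff_mk] using hasSum_p_mul_pow hq
  have h := hasSum_coeff_mul (hp hq) (hasSum_coeff_expand (by norm_num) (hp hq'))
  simpa only [coeff_mul_expand, PowerSeries.coeff_mk, mul_inv, pSigma, Nat.cast_sum,
    Nat.cast_mul] using h

end PartitionSeries

section FourierExpansion

open Complex

lemma qParam_add (h : ℝ) (z w : ℂ) : 𝕢 h (z + w) = 𝕢 h z * 𝕢 h w := by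
  simp only [Function.Periodic.qParam, ← Complex.exp_add]
  ring_nf

lemma qParam_neg (h : ℝ) (z : ℂ) : 𝕢 h (-z) = (𝕢 h z)⁻¹ := by
  simp only [Function.Periodic.qParam, ← Complex.exp_neg]
  ring_nf

lemma qParam_natCast_mul (h : ℝ) (n : ℕ) (z : ℂ) : 𝕢 h (n * z) = 𝕢 h z ^ n := by
  simp only [Function.Periodic.qParam, ← Complex.exp_nat_mul]
  ring_nf

lemma norm_qParam_one (z : ℂ) : ‖𝕢 1 z‖ = Real.exp (-(2 * π * z.im)) := by
  rw [Function.Periodic.norm_qParam]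
  ring_nf

lemma integral_qParam_one_intCast_mul (k : ℤ) (y : ℝ) :
    ∫ x in (-(1 / 2) : ℝ)..(1 / 2), 𝕢 1 (k * (x + y * I)) = if k = 0 then 1 else 0 := by
  split_ifs with hk
  · subst hk
    simp only [Function.Periodic.qParam, Int.cast_zero, zero_mul, mul_zero, zero_div,
      Complex.exp_zero, intervalIntegral.integral_const]
    norm_num
  · have hc : 2 * π * I * k ≠ 0 := mul_ne_zero two_pi_I_ne_zero (mod_cast hk)
    have hsplit (x : ℝ) : 𝕢 1 (k * (x + y * I)) =
        𝕢 1 (k * (y * I)) * cexp (2 * π * I * k * x) := by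
      simp only [Function.Periodic.qParam, ← Complex.exp_add, ofReal_one]
      ring_nf
    have hperiod : cexp (2 * π * I * k * ((1 / 2 : ℝ) : ℂ)) =
        cexp (2 * π * I * k * ((-(1 / 2) : ℝ) : ℂ)) := by
      rw [Complex.exp_eq_exp_iff_exists_int]
      exact ⟨k, by push_cast; ring⟩
    simp_rw [hsplit]
    rw [intervalIntegral.integral_const_mul, integral_exp_mul_complex hc, hperiod, sub_self,
      zero_div, mul_zero]

lemma integral_mul_qParam_neg_eq_coeff {a : ℕ → ℂ} {f : ℂ → ℂ} {y : ℝ}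
    (hf : ∀ x : ℝ, HasSum (fun m ↦ a m * 𝕢 1 (x + y * I) ^ m) (f (x + y * I))) (n : ℕ) :
    ∫ x in (-(1 / 2) : ℝ)..(1 / 2), f (x + y * I) * 𝕢 1 (-(n * (x + y * I))) = a n := by
  have hterm (m : ℕ) (x : ℝ) : a m * 𝕢 1 (x + y * I) ^ m * 𝕢 1 (-(n * (x + y * I))) =
      a m * 𝕢 1 (((m - n : ℤ) : ℂ) * (x + y * I)) := by
    rw [← qParam_natCast_mul, mul_assoc, ← qParam_add]
    push_cast
    ring_nf
  have hnorm (m : ℕ) (x : ℝ) : ‖a m * 𝕢 1 (x + y * I) ^ m * 𝕢 1 (-(n * (x + y * I)))‖ =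
      ‖a m * 𝕢 1 (0 + y * I) ^ m * 𝕢 1 (-(n * (0 + y * I)))‖ := by
    simp [norm_qParam_one]
  have hsum := intervalIntegral.hasSum_integral_of_dominated_convergence
    (μ := MeasureTheory.volume) (a := -(1 / 2 : ℝ)) (b := 1 / 2)
    (F := fun m x ↦ a m * 𝕢 1 (x + y * I) ^ m * 𝕢 1 (-(n * (x + y * I))))
    (f := fun x ↦ f (x + y * I) * 𝕢 1 (-(n * (x + y * I))))
    (fun m _ ↦ ‖a m * 𝕢 1 (0 + y * I) ^ m * 𝕢 1 (-(n * (0 + y * I)))‖)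
    (fun m ↦ by
      have := Function.Periodic.continuous_qParam (h := 1)
      exact Continuous.aestronglyMeasurable (by fun_prop))
    (fun m ↦ .of_forall fun x _ ↦ (hnorm m x).le)
    (.of_forall fun x _ ↦ summable_norm_iff.2 <| by
      simpa using (hf 0).summable.mul_right (𝕢 1 (-(n * (((0 : ℝ) : ℂ) + y * I)))))
    (by simp) (.of_forall fun x _ ↦ (hf x).mul_right _)
  simp_rw [hterm, intervalIntegral.integral_const_mul, integral_qParam_one_intCast_mul,
    sub_eq_zero, Nat.cast_inj] at hsum
  simpa using! hsum.unique (hasSum_single n fun m hm ↦ by simp [hm])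

/-- The eta quotient `(η(z) η(Nz))⁻¹`; for `N = 23` its Fourier coefficients are the values of
`pSigma`, with the index shifted by one. -/
noncomputable def etaProdInv (N : ℕ) (z : ℂ) : ℂ :=
  (ModularForm.eta z * ModularForm.eta (N * z))⁻¹

lemma hasSum_pSigma_mul_qParam_pow {z : ℂ} (hz : 0 < z.im) :
    HasSum (fun n ↦ (pSigma n : ℂ) * 𝕢 1 z ^ n) (𝕢 1 z * etaProdInv 23 z) := by
  have hq : ‖𝕢 1 z‖ < 1 := by
    rw [norm_qParam_one, Real.exp_lt_one_iff]
    have := Real.pi_pos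
    simpa using by positivity
  have hprefactor : 𝕢 24 z * 𝕢 24 ((23 : ℕ) * z) = 𝕢 1 z := by
    simp only [Function.Periodic.qParam, ← Complex.exp_add, ofReal_ofNat, ofReal_one]
    congr 1
    push_cast
    ring
  have hvalue : 𝕢 1 z * etaProdInv 23 z =
      ((∏' i : ℕ, (1 - 𝕢 1 z ^ (i + 1))) * ∏' i : ℕ, (1 - (𝕢 1 z ^ 23) ^ (i + 1)))⁻¹ := by
    have hne := Function.Periodic.qParam_ne_zero (h := 1) z
    simp only [etaProdInv, ModularForm.eta, ModularForm.eta_q]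
    rw [mul_mul_mul_comm, hprefactor, qParam_natCast_mul, mul_inv, mul_inv_cancel_left₀ hne]
  exact hvalue ▸ hasSum_pSigma_mul_pow hq

lemma integral_etaProdInv_mul_qParam_neg (n : ℕ) {y : ℝ} (hy : 0 < y) :
    ∫ x in (-(1 / 2) : ℝ)..(1 / 2), etaProdInv 23 (x + y * I) * 𝕢 1 (-(n * (x + y * I))) =
      pSigma (n + 1) := by
  rw [← integral_mul_qParam_neg_eq_coeff (f := fun z ↦ 𝕢 1 z * etaProdInv 23 z)
    (fun x ↦ hasSum_pSigma_mul_qParam_pow (by simpa using hy)) (n + 1)]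
  congr! 2 with x
  have hshift (z : ℂ) : 𝕢 1 (-(n * z)) = 𝕢 1 z * 𝕢 1 (-((n + 1 : ℕ) * z)) := by
    rw [← qParam_add]
    push_cast
    ring_nf
  rw [hshift]
  ring

lemma exists_norm_etaProdInv_sub_le {δ : ℝ} (hδ : 0 < δ) :
    ∃ C, ∀ w : ℂ, δ ≤ w.im → ‖etaProdInv 23 w - 𝕢 1 (-w)‖ ≤ C := by
  set r := ‖𝕢 1 (δ * I)‖ with hr
  have hsummable : Summable fun n ↦ (pSigma (n + 1) : ℝ) * r ^ n := by
    have h := hasSum_pSigma_mul_qParam_pow (z := δ * I) (by simpa using hδ)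
    have hne : r ≠ 0 := norm_ne_zero_iff.2 (Function.Periodic.qParam_ne_zero _)
    refine (((summable_nat_add_iff 1).2 h.summable.norm).mul_right r⁻¹).congr fun n ↦ ?_
    rw [norm_mul, norm_natCast, norm_pow, ← hr, pow_succ]
    field_simp
  refine ⟨∑' n, (pSigma (n + 1) : ℝ) * r ^ n, fun w hw ↦ ?_⟩
  have hne := Function.Periodic.qParam_ne_zero (h := 1) w
  have htail : HasSum (fun n ↦ (pSigma (n + 1) : ℂ) * 𝕢 1 w ^ n)
      (etaProdInv 23 w - 𝕢 1 (-w)) := by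
    have h := (((hasSum_nat_add_iff' 1).2
      (hasSum_pSigma_mul_qParam_pow (hδ.trans_le hw))).mul_left (𝕢 1 w)⁻¹)
    convert! h using 1
    · funext n
      rw [pow_succ]
      field_simp
    · have hone : pSigma 0 = 1 := by simp [pSigma, p]
      rw [qParam_neg, Finset.sum_range_one, hone, mul_sub, inv_mul_cancel_left₀ hne]
      simp
  refine htail.norm_le_of_bounded hsummable.hasSum fun n ↦ ?_
  rw [norm_mul, norm_natCast, norm_pow]
  gcongr
  rw [hr, norm_qParam_one, norm_qParam_one]
  have := Real.pi_pos
  gcongr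
  simpa using hw

end FourierExpansion

section BesselLowerBound

open Real

lemma sixteen_pow_le_four_mul_centralBinom_sq {k : ℕ} (hk : 1 ≤ k) :
    16 ^ k ≤ 4 * k * k.centralBinom ^ 2 := by
  induction k, hk using Nat.le_induction with
  | base => decide
  | succ k _ ih =>
    have hrec := Nat.succ_mul_centralBinom_succ k
    refine Nat.le_of_mul_le_mul_left ?_ k.succ_pos
    calc (k + 1) * 16 ^ (k + 1) = 16 * (k + 1) * 16 ^ k := by ring
      _ ≤ 16 * (k + 1) * (4 * k * k.centralBinom ^ 2) := by gcongr
      _ ≤ 4 * (2 * (2 * k + 1) * k.centralBinom) ^ 2 := by nlinarith [sq_nonneg k.centralBinom]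
      _ = (k + 1) * (4 * (k + 1 : ℕ) * (k + 1).centralBinom ^ 2) := by
        rw [← hrec]
        ring

lemma four_pow_div_le_inv_factorial_mul_factorial (m : ℕ) :
    4 ^ (m + 1) / (4 * √(m + 1 : ℕ) * (2 * (m + 1)).factorial) ≤
      1 / (m.factorial * (m + 2).factorial : ℝ) := by
  have hcentral : (4 : ℝ) ^ (m + 1) ≤ 2 * √(m + 1 : ℕ) * (m + 1).centralBinom := by
    refine (pow_le_pow_iff_left₀ (by positivity) (by positivity) two_ne_zero).1 ?_
    rw [mul_pow, mul_pow, Real.sq_sqrt (by positivity), ← pow_mul, mul_comm, pow_mul]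
    have h := sixteen_pow_le_four_mul_centralBinom_sq m.succ_pos
    rw [show (2 : ℝ) ^ 2 = 4 by norm_num, show (4 : ℝ) ^ 2 = 16 by norm_num]
    exact_mod_cast h
  have hfact : ((2 * (m + 1)).factorial : ℝ) =
      (m + 1).centralBinom * (m + 1).factorial * (m + 1).factorial := by
    have h := Nat.choose_mul_factorial_mul_factorial (n := 2 * (m + 1)) (k := m + 1) (by omega)
    rw [show 2 * (m + 1) - (m + 1) = m + 1 by omega] at h
    exact_mod_cast h.symm
  have hcb : (0 : ℝ) < (m + 1).centralBinom := mod_cast (m + 1).centralBinom_pos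
  rw [hfact, Nat.factorial_succ (m + 1), Nat.factorial_succ m, div_le_div_iff₀ (by positivity)
    (by positivity)]
  push_cast at hcentral ⊢
  calc (4 : ℝ) ^ (m + 1) * (m.factorial * ((m + 1 + 1) * ((m + 1) * m.factorial)))
      ≤ 2 * √(m + 1) * (m + 1).centralBinom *
          (m.factorial * ((m + 1 + (m + 1)) * ((m + 1) * m.factorial))) := by
        gcongr
        linarith [m.cast_nonneg (α := ℝ)]
    _ = _ := by ring

lemma tangent_le_inv_sqrt {k x : ℝ} (hk : 0 < k) (hx : 0 < x) :
    1 / √x * (3 / 2 - k / (2 * x)) ≤ 1 / √k := by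
  obtain ⟨u, hu, rfl⟩ : ∃ u, 0 < u ∧ u ^ 2 = k := ⟨√k, Real.sqrt_pos.2 hk, Real.sq_sqrt hk.le⟩
  obtain ⟨v, hv, rfl⟩ : ∃ v, 0 < v ∧ v ^ 2 = x := ⟨√x, Real.sqrt_pos.2 hx, Real.sq_sqrt hx.le⟩
  rw [Real.sqrt_sq hu.le, Real.sqrt_sq hv.le, ← sub_nonneg]
  have h : 1 / u - 1 / v * (3 / 2 - u ^ 2 / (2 * v ^ 2)) =
      (u - v) ^ 2 * (u + 2 * v) / (2 * u * v ^ 3) := by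
    field_simp
    ring
  rw [h]
  positivity

lemma hasSum_I2 (x : ℝ) : HasSum (fun m : ℕ ↦
    (x / 2) ^ (2 * m + 2) / ((m.factorial : ℝ) * ((m + 2).factorial : ℝ))) (I2 x) := by
  refine Summable.hasSum (.of_nonneg_of_le (fun m ↦ ?_) (fun m ↦ ?_)
    ((Real.summable_pow_div_factorial ((x / 2) ^ 2)).mul_right ((x / 2) ^ 2)))
  · rw [show 2 * m + 2 = 2 * (m + 1) by ring, pow_mul]
    positivity
  · rw [pow_add, pow_mul, div_mul_eq_mul_div]
    gcongr
    exact le_mul_of_one_le_right (by positivity) (mod_cast (m + 2).factorial_pos)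

-- Bounding `1 / √k` below by its tangent at `k = x` keeps the `k`-dependence affine, so that the
-- termwise minorant of the series of `I2` sums to `cosh` and `sinh`.
lemma cosh_sinh_le_I2 {x : ℝ} (hx : 0 < x) :
    1 / (4 * √x) * (3 / 2 * (cosh x - 1) - sinh x / 4) ≤ I2 x := by
  have hcosh : HasSum (fun m : ℕ ↦ x ^ (2 * (m + 1)) / (2 * (m + 1)).factorial) (cosh x - 1) := by
    simpa using (hasSum_nat_add_iff' 1).2 (Real.hasSum_cosh x)
  have hminorant := ((hcosh.mul_left (3 / 2)).sub ((Real.hasSum_sinh x).div_const 4)).mul_left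
    (1 / (4 * √x))
  refine hasSum_le (fun m ↦ ?_) hminorant (hasSum_I2 x)
  have hfact : ((2 * (m + 1)).factorial : ℝ) = 2 * (m + 1) * (2 * m + 1).factorial := by
    rw [show 2 * (m + 1) = 2 * m + 1 + 1 by ring, Nat.factorial_succ]
    push_cast
    ring
  calc 1 / (4 * √x) * (3 / 2 * (x ^ (2 * (m + 1)) / (2 * (m + 1)).factorial) -
        x ^ (2 * m + 1) / (2 * m + 1).factorial / 4)
      = x ^ (2 * (m + 1)) / (4 * (2 * (m + 1)).factorial) *
          (1 / √x * (3 / 2 - (m + 1 : ℕ) / (2 * x))) := by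
        rw [hfact]
        push_cast
        field_simp
        ring
    _ ≤ x ^ (2 * (m + 1)) / (4 * (2 * (m + 1)).factorial) * (1 / √(m + 1 : ℕ)) := by
        gcongr
        exact tangent_le_inv_sqrt (by positivity) hx
    _ = (x / 2) ^ (2 * m + 2) *
          (4 ^ (m + 1) / (4 * √(m + 1 : ℕ) * (2 * (m + 1)).factorial)) := by
        rw [div_pow, show 2 * m + 2 = 2 * (m + 1) by ring, pow_mul 2]
        norm_num
        field_simp
    _ ≤ (x / 2) ^ (2 * m + 2) * (1 / (m.factorial * (m + 2).factorial : ℝ)) := by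
        rw [show 2 * m + 2 = 2 * (m + 1) by ring, pow_mul]
        exact mul_le_mul_of_nonneg_left (four_pow_div_le_inv_factorial_mul_factorial m)
          (by positivity)
    _ = _ := mul_one_div _ _

lemma exp_div_sqrt_le_I2 {x : ℝ} (hx : 3 ≤ x) : exp x / (16 * √x) ≤ I2 x := by
  have hx0 : 0 < x := by linarith
  refine le_trans ?_ (cosh_sinh_le_I2 hx0)
  have hexp : 4 ≤ exp x := by linarith [Real.add_one_le_exp x]
  have hbracket : exp x / 4 ≤ 3 / 2 * (cosh x - 1) - sinh x / 4 := by
    rw [Real.cosh_eq, Real.sinh_eq]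
    linarith [Real.exp_pos (-x)]
  calc exp x / (16 * √x) = 1 / (4 * √x) * (exp x / 4) := by
        field_simp
        norm_num
    _ ≤ _ := by gcongr

end BesselLowerBound

section BesselIntegral

open Complex

lemma hasSum_circleIntegral_exp_mul {f g : ℂ → ℂ} {R : ℝ} (hR : 0 ≤ R)
    (hf : ContinuousOn f (Metric.sphere 0 R)) (hg : ContinuousOn g (Metric.sphere 0 R)) :
    HasSum (fun m : ℕ ↦ ∮ z in C(0, R), g z ^ m / m.factorial * f z)
      (∮ z in C(0, R), cexp (g z) * f z) := by
  have hcirc : ∀ θ, circleMap 0 R θ ∈ Metric.sphere (0 : ℂ) R := circleMap_mem_sphere 0 hR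
  have hf' : Continuous fun θ ↦ f (circleMap 0 R θ) :=
    hf.comp_continuous (continuous_circleMap 0 R) hcirc
  have hg' : Continuous fun θ ↦ g (circleMap 0 R θ) :=
    hg.comp_continuous (continuous_circleMap 0 R) hcirc
  obtain ⟨M, hM⟩ := (isCompact_sphere (0 : ℂ) R).exists_bound_of_continuousOn hf
  obtain ⟨B, hB⟩ := (isCompact_sphere (0 : ℂ) R).exists_bound_of_continuousOn hg
  simp only [circleIntegral, deriv_circleMap, smul_eq_mul]
  refine intervalIntegral.hasSum_integral_of_dominated_convergence
    (fun m _ ↦ R * (B ^ m / m.factorial * M)) (fun m ↦ ?_) (fun m ↦ .of_forall fun θ _ ↦ ?_)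
    (.of_forall fun θ _ ↦ ?_) (by simp) (.of_forall fun θ _ ↦ ?_)
  · exact (((continuous_circleMap 0 R).mul_const I).mul
      (((hg'.pow m).div_const _).mul hf')).aestronglyMeasurable
  · simp only [norm_mul, norm_circleMap_zero, abs_of_nonneg hR, norm_I, mul_one, norm_div, norm_pow,
      Complex.norm_natCast]
    have hB0 : 0 ≤ B := (norm_nonneg _).trans (hB _ (hcirc θ))
    gcongr
    exacts [hB _ (hcirc θ), hM _ (hcirc θ)]
  · exact ((Real.summable_pow_div_factorial B).mul_right M).mul_left R
  · rw [Complex.exp_eq_exp_ℂ]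
    exact ((NormedSpace.expSeries_div_hasSum_exp (g (circleMap 0 R θ))).mul_right _).mul_left _

lemma circleIntegral_zpow {R : ℝ} (hR : R ≠ 0) (k : ℤ) :
    ∮ z in C(0, R), z ^ k = if k = -1 then 2 * π * I else 0 := by
  split_ifs with hk
  · subst hk
    simpa using! circleIntegral.integral_sub_center_inv (0 : ℂ) hR
  · simpa using circleIntegral.integral_sub_zpow_of_ne hk 0 0 R

lemma circleIntegral_exp_div_mul_pow (a : ℂ) {R : ℝ} (hR : 0 < R) (k : ℕ) :
    ∮ z in C(0, R), cexp (a / z) * z ^ k = 2 * π * I * (a ^ (k + 1) / (k + 1).factorial) := by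
  have hne : ∀ z ∈ Metric.sphere (0 : ℂ) R, z ≠ 0 :=
    fun z hz ↦ ne_zero_of_mem_sphere hR.ne' ⟨z, hz⟩
  have hsum := hasSum_circleIntegral_exp_mul hR.le (f := fun z ↦ z ^ k) (g := fun z ↦ a / z)
    (by fun_prop) (continuousOn_const.div continuousOn_id hne)
  have hterm (m : ℕ) : ∮ z in C(0, R), (a / z) ^ m / m.factorial * z ^ k =
      if m = k + 1 then 2 * π * I * (a ^ (k + 1) / (k + 1).factorial) else 0 := by
    have hpow : ∮ z in C(0, R), (a / z) ^ m / m.factorial * z ^ k =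
        ∮ z in C(0, R), a ^ m / m.factorial * z ^ ((k : ℤ) - m) := by
      refine circleIntegral.integral_congr hR.le fun z hz ↦ ?_
      have := hne z hz
      simp only [zpow_sub₀ this, zpow_natCast, div_pow]
      field_simp
    rw [hpow, circleIntegral.integral_const_mul, circleIntegral_zpow hR.ne']
    by_cases hm : m = k + 1
    · subst hm
      simp [mul_comm]
    · rw [if_neg hm, if_neg (by omega), mul_zero]
  simp_rw [hterm] at hsum
  exact hsum.unique (hasSum_ite_eq (k + 1) _)

lemma circleIntegral_exp_mul_self_eq_I2 {a b : ℂ} {x R : ℝ} (hR : 0 < R) (hb : b ≠ 0)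
    (hab : a * b = ((x / 2) ^ 2 : ℝ)) :
    ∮ z in C(0, R), cexp (b * z) * (cexp (a / z) * z) = 2 * π * I * (a / b) * I2 x := by
  have hne : ∀ z ∈ Metric.sphere (0 : ℂ) R, z ≠ 0 :=
    fun z hz ↦ ne_zero_of_mem_sphere hR.ne' ⟨z, hz⟩
  have hsum := hasSum_circleIntegral_exp_mul hR.le (f := fun z ↦ cexp (a / z) * z)
    (g := fun z ↦ b * z)
    ((continuousOn_const.div continuousOn_id hne).cexp.mul continuousOn_id) (by fun_prop)
  have hterm (m : ℕ) : ∮ z in C(0, R), (b * z) ^ m / m.factorial * (cexp (a / z) * z) =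
      2 * π * I * (a / b) * ((x / 2) ^ (2 * m + 2) / (m.factorial * (m + 2).factorial) : ℝ) := by
    have hpow (z : ℂ) : (b * z) ^ m / m.factorial * (cexp (a / z) * z) =
        b ^ m / m.factorial * (cexp (a / z) * z ^ (m + 1)) := by ring
    simp_rw [hpow]
    rw [circleIntegral.integral_const_mul, circleIntegral_exp_div_mul_pow a hR,
      show 2 * m + 2 = 2 * (m + 1) by ring, pow_mul, ofReal_div, ofReal_pow _ (m + 1), ← hab]
    push_cast
    field_simp
    ring
  simp_rw [hterm] at hsum
  exact hsum.unique ((hasSum_ofReal.2 (hasSum_I2 x)).mul_left _)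

end BesselIntegral

section Contour

open Complex

lemma exists_hasDerivAt_comp_exp {f : ℂ → ℂ} (hf : DifferentiableOn ℂ f {0}ᶜ) :
    ∃ K : ℂ → ℂ, ∀ w, HasDerivAt K (f (cexp w) * cexp w) w := by
  have hd : Differentiable ℂ fun w ↦ f (cexp w) * cexp w := fun w ↦
    ((hf.differentiableAt (isOpen_compl_singleton.mem_nhds (exp_ne_zero w))).comp w
      differentiable_exp.differentiableAt).mul differentiable_exp.differentiableAt
  obtain ⟨K, hK⟩ := hd.isExactOn_univ
  exact ⟨K, fun w ↦ hK w (Set.mem_univ w)⟩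

lemma arg_mem_Icc_zero_pi_div_two {z : ℂ} (hre : 0 ≤ z.re) (him : 0 ≤ z.im) :
    arg z ∈ Set.Icc 0 (π / 2) :=
  ⟨arg_nonneg_iff.2 him, (abs_le.1 (abs_arg_le_pi_div_two_iff.2 hre)).2⟩

lemma log_neg_conj {z : ℂ} (hre : 0 ≤ z.re) (him : 0 < z.im) :
    log (-(starRingEnd ℂ) z) = Real.log ‖z‖ + (π - arg z : ℝ) * I := by
  have hz : z ≠ 0 := by
    rintro rfl
    simp at him
  obtain ⟨harg0, hargpi⟩ := arg_mem_Icc_zero_pi_div_two hre him.le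
  have hexp : cexp (Real.log ‖z‖ + (π - arg z : ℝ) * I) = -(starRingEnd ℂ) z := by
    rw [show (Real.log ‖z‖ + (π - arg z : ℝ) * I : ℂ) = (starRingEnd ℂ) (log z) + π * I by
      rw [log, map_add, map_mul, conj_ofReal, conj_ofReal, conj_I]
      push_cast
      ring]
    rw [exp_add, exp_conj, exp_log hz, exp_pi_mul_I, mul_neg_one]
  rw [← hexp, log_exp]
  · simp only [add_im, ofReal_im, mul_im, ofReal_re, I_im, mul_one, I_re, mul_zero, add_zero,
      zero_add]
    linarith [Real.pi_pos]
  · simp only [add_im, ofReal_im, mul_im, ofReal_re, I_im, mul_one, I_re, mul_zero, add_zero,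
      zero_add]
    linarith

lemma integral_segment_eq_sub {f K : ℂ → ℂ} (hf : ContinuousOn f {0}ᶜ)
    (hK : ∀ w, HasDerivAt K (f (cexp w) * cexp w) w) (a b : ℝ) {y : ℝ} (hy : y ≠ 0) :
    ∫ x in a..b, f (x + y * I) = K (log (b + y * I)) - K (log (a + y * I)) := by
  have hslit (x : ℝ) : (x + y * I : ℂ) ∈ slitPlane := Or.inr (by simpa using hy)
  have hderiv (x : ℝ) : HasDerivAt (fun x : ℝ ↦ K (log (x + y * I))) (f (x + y * I)) x := by
    have hne := slitPlane_ne_zero (hslit x)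
    have h := (hK _).comp x
      (((hasDerivAt_id x).ofReal_comp.add_const (y * I)).clog_real (hslit x))
    simpa [exp_log hne, mul_assoc, hne] using! h
  have hcont : Continuous fun x : ℝ ↦ f (x + y * I) :=
    hf.comp_continuous (by fun_prop) fun x ↦ slitPlane_ne_zero (hslit x)
  exact intervalIntegral.integral_eq_sub_of_hasDerivAt (fun x _ ↦ hderiv x)
    (hcont.intervalIntegrable a b)

lemma continuous_deriv_circleMap_mul {f : ℂ → ℂ} {R : ℝ} (hR : R ≠ 0)
    (hf : ContinuousOn f {0}ᶜ) :
    Continuous fun θ ↦ deriv (circleMap 0 R) θ * f (circleMap 0 R θ) := by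
  simp_rw [deriv_circleMap]
  exact ((continuous_circleMap 0 R).mul_const I).mul
    (hf.comp_continuous (continuous_circleMap 0 R) fun θ ↦ circleMap_ne_center hR)

lemma integral_arc_eq_sub {f K : ℂ → ℂ} (hf : ContinuousOn f {0}ᶜ)
    (hK : ∀ w, HasDerivAt K (f (cexp w) * cexp w) w) (α β : ℝ) {R : ℝ} (hR : 0 < R) :
    ∫ θ in α..β, deriv (circleMap 0 R) θ * f (circleMap 0 R θ) =
      K (Real.log R + β * I) - K (Real.log R + α * I) := by
  have hcircle (θ : ℝ) : cexp (Real.log R + θ * I) = circleMap 0 R θ := by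
    rw [exp_add, ← ofReal_exp, Real.exp_log hR, circleMap_zero]
  have hderiv (θ : ℝ) : HasDerivAt (fun θ : ℝ ↦ K (Real.log R + θ * I))
      (deriv (circleMap 0 R) θ * f (circleMap 0 R θ)) θ := by
    have h := (hK _).comp θ
      (((hasDerivAt_id θ).ofReal_comp.mul_const I).const_add (Real.log R : ℂ))
    simpa [← hcircle, mul_comm, mul_left_comm, mul_assoc] using! h
  exact intervalIntegral.integral_eq_sub_of_hasDerivAt (fun θ _ ↦ hderiv θ)
    ((continuous_deriv_circleMap_mul hR.ne' hf).intervalIntegrable α β)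

-- The segment is homotopic in `ℂ ∖ {0}` to the arc above it, so only the arc below it remains.
lemma integral_segment_add_circleIntegral {f : ℂ → ℂ} (hf : DifferentiableOn ℂ f {0}ᶜ)
    {z : ℂ} (hre : 0 ≤ z.re) (him : 0 < z.im) :
    (∫ x in -z.re..z.re, f (x + z.im * I)) + ∮ w in C(0, ‖z‖), f w =
      ∫ θ in π - arg z..arg z + 2 * π, deriv (circleMap 0 ‖z‖) θ * f (circleMap 0 ‖z‖ θ) := by
  obtain ⟨K, hK⟩ := exists_hasDerivAt_comp_exp hf
  have hz : 0 < ‖z‖ := him.trans_le ((le_abs_self _).trans (abs_im_le_norm z))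
  have hleft : ((-z.re : ℝ) + z.im * I : ℂ) = -(starRingEnd ℂ) z := by
    apply Complex.ext <;> simp
  have hlog : log z = Real.log ‖z‖ + arg z * I := rfl
  have hperiodic : Function.Periodic
      (fun θ ↦ deriv (circleMap 0 ‖z‖) θ * f (circleMap 0 ‖z‖ θ)) (2 * π) := fun θ ↦ by
    simp only [deriv_circleMap, periodic_circleMap 0 ‖z‖ θ]
  have hcircle : ∮ w in C(0, ‖z‖), f w = ∫ θ in arg z..arg z + 2 * π,
      deriv (circleMap 0 ‖z‖) θ * f (circleMap 0 ‖z‖ θ) := by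
    rw [hperiodic.intervalIntegral_add_eq (arg z) 0, zero_add]
    rfl
  rw [hcircle, integral_segment_eq_sub hf.continuousOn hK _ _ him.ne',
    integral_arc_eq_sub hf.continuousOn hK _ _ hz, integral_arc_eq_sub hf.continuousOn hK _ _ hz,
    re_add_im, hleft, log_neg_conj hre him, hlog]
  ring

lemma sin_le_sin_of_mem_lower_arc {t θ : ℝ} (ht : t ∈ Set.Icc 0 (π / 2))
    (hθ : θ ∈ Set.Icc (π - t) (t + 2 * π)) : Real.sin θ ≤ Real.sin t := by
  have hbottom : |θ - 3 * π / 2| ≤ t + π / 2 := abs_le.2 ⟨by linarith [hθ.1], by linarith [hθ.2]⟩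
  have hcos := Real.cos_le_cos_of_nonneg_of_le_pi (abs_nonneg _) (by linarith [ht.2]) hbottom
  rw [Real.cos_abs, Real.cos_add_pi_div_two,
    show θ - 3 * π / 2 = θ + π / 2 - 2 * π by ring, Real.cos_sub_two_pi,
    Real.cos_add_pi_div_two] at hcos
  linarith

lemma norm_integral_segment_add_circleIntegral_le {f : ℂ → ℂ} (hf : DifferentiableOn ℂ f {0}ᶜ)
    {z : ℂ} (hre : 0 ≤ z.re) (him : 0 < z.im) {B : ℝ}
    (hB : ∀ w, ‖w‖ = ‖z‖ → w.im ≤ z.im → ‖f w‖ ≤ B) :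
    ‖(∫ x in -z.re..z.re, f (x + z.im * I)) + ∮ w in C(0, ‖z‖), f w‖ ≤ 2 * π * ‖z‖ * B := by
  have harg := arg_mem_Icc_zero_pi_div_two hre him.le
  have hle : π - arg z ≤ arg z + 2 * π := by linarith [harg.1, Real.pi_pos]
  have hB0 : 0 ≤ B := (norm_nonneg _).trans (hB z rfl le_rfl)
  rw [integral_segment_add_circleIntegral hf hre him]
  calc _ ≤ ‖z‖ * B * |arg z + 2 * π - (π - arg z)| := by
        refine intervalIntegral.norm_integral_le_of_norm_le_const fun θ hθ ↦ ?_
        rw [Set.uIoc_of_le hle] at hθ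
        rw [norm_mul, deriv_circleMap, norm_mul, norm_I, mul_one, norm_circleMap_zero, abs_norm]
        gcongr
        refine hB _ (by simp) ?_
        rw [circleMap_zero, im_ofReal_mul, exp_ofReal_mul_I_im, ← norm_mul_sin_arg z]
        gcongr
        exact sin_le_sin_of_mem_lower_arc harg (Set.Ioc_subset_Icc_self hθ)
    _ ≤ ‖z‖ * B * (2 * π) := by
        rw [abs_of_nonneg (sub_nonneg.2 hle)]
        gcongr
        linarith [harg.2]
    _ = 2 * π * ‖z‖ * B := by ring

end Contour

section EtaQuotient

open Complex
open scoped ModularForm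

lemma norm_eta_pow_four_mul_im_smul (g : SL(2, ℤ)) (τ : ℍ) :
    ‖ModularForm.eta ↑(g • τ)‖ ^ 4 * (g • τ).im = ‖ModularForm.eta τ‖ ^ 4 * τ.im := by
  have hslash : ModularForm.discriminant ∣[(12 : ℤ)] g = ModularForm.discriminant :=
    SlashInvariantFormClass.slash_action_eq CuspForm.discriminant _ ⟨g, rfl⟩
  have hpetersson := congrArg norm
    (UpperHalfPlane.petersson_slash_SL 12 ModularForm.discriminant ModularForm.discriminant g τ)
  have hnorm (σ : ℍ) : ‖UpperHalfPlane.petersson 12 ModularForm.discriminant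
      ModularForm.discriminant σ‖ = (‖ModularForm.eta σ‖ ^ 4 * σ.im) ^ 12 := by
    simp only [UpperHalfPlane.petersson, ModularForm.discriminant, norm_mul, norm_pow, norm_zpow,
      RCLike.norm_conj, norm_real, Real.norm_of_nonneg σ.im_pos.le]
    norm_cast
    ring
  rw [hslash, hnorm, hnorm] at hpetersson
  have hpos (σ : ℍ) : 0 ≤ ‖ModularForm.eta σ‖ ^ 4 * σ.im := by have := σ.im_pos; positivity
  exact (pow_left_inj₀ (hpos _) (hpos _) (by norm_num)).1 hpetersson.symm

lemma exists_coe_smul_eq_natCast_mul {N : ℕ} {z z' : ℍ} (hz' : (z' : ℂ) = N * z) {g : SL(2, ℤ)}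
    (hg : (N : ℤ) ∣ g 1 0) : ∃ g' : SL(2, ℤ), (↑(g' • z') : ℂ) = N * ↑(g • z) := by
  obtain ⟨c, hc⟩ := hg
  have hdet := g.det_coe
  rw [Matrix.det_fin_two] at hdet
  obtain ⟨g', hg'⟩ : ∃ g' : SL(2, ℤ), g'.1 = !![g 0 0, N * g 0 1; c, g 1 1] := by
    refine ⟨⟨_, ?_⟩, rfl⟩
    rw [Matrix.det_fin_two_of]
    linear_combination hdet + g 0 1 * hc
  refine ⟨g', ?_⟩
  rw [UpperHalfPlane.coe_specialLinearGroup_apply, UpperHalfPlane.coe_specialLinearGroup_apply]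
  simp only [hg', hc, hz', algebraMap_int_eq, eq_intCast, Matrix.of_apply, Matrix.cons_val',
    Matrix.cons_val_zero, Matrix.cons_val_one, Matrix.cons_val_fin_one, ofReal_intCast,
    Int.cast_mul, Int.cast_natCast, ofReal_mul, ofReal_natCast]
  ring

lemma exists_natCast_mul_coe_smul_eq {N : ℕ} {z z' : ℍ} (hz' : (z' : ℂ) = N * z) {g : SL(2, ℤ)}
    (hg : (N : ℤ) ∣ g 0 0) : ∃ g' : SL(2, ℤ), N * (↑(g' • z') : ℂ) = ↑(g • z) := by
  obtain ⟨a, ha⟩ := hg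
  have hN : (N : ℂ) ≠ 0 := fun h ↦ z'.ne_zero (by rw [hz', h, zero_mul])
  have hdet := g.det_coe
  rw [Matrix.det_fin_two] at hdet
  obtain ⟨g', hg'⟩ : ∃ g' : SL(2, ℤ), g'.1 = !![a, g 0 1; g 1 0, N * g 1 1] := by
    refine ⟨⟨_, ?_⟩, rfl⟩
    rw [Matrix.det_fin_two_of]
    linear_combination hdet - g 1 1 * ha
  refine ⟨g', ?_⟩
  rw [UpperHalfPlane.coe_specialLinearGroup_apply, UpperHalfPlane.coe_specialLinearGroup_apply]
  simp only [hg', ha, hz', algebraMap_int_eq, eq_intCast, Matrix.of_apply, Matrix.cons_val',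
    Matrix.cons_val_zero, Matrix.cons_val_one, Matrix.cons_val_fin_one, ofReal_intCast,
    Int.cast_mul, Int.cast_natCast, ofReal_mul, ofReal_natCast]
  field_simp

lemma csqrt_mul_self (z : ℂ) : sqrt z * sqrt z = z := by
  rw [← sq]
  exact cpow_ofNat_inv_pow z 2

lemma csqrt_ofReal_mul {r : ℝ} (hr : 0 < r) {z : ℂ} (hz : z ≠ 0) :
    sqrt (r * z) = √r * sqrt z := by
  rw [sqrt_eq_exp hz, sqrt_eq_exp (mul_ne_zero (ofReal_ne_zero.2 hr.ne') hz),
    log_ofReal_mul hr hz, Real.sqrt_eq_rpow, Real.rpow_def_of_pos hr, ofReal_exp, ← exp_add]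
  push_cast
  ring_nf

lemma etaProdInv_eq_mul_etaProdInv_fricke {N : ℕ} (hN : 0 < N) {z : ℂ} (hz : 0 < z.im) :
    etaProdInv N z = -I * √N * z * etaProdInv N (-1 / (N * z)) := by
  have hz0 : z ≠ 0 := by rintro rfl; simp at hz
  have hN0 : (N : ℂ) ≠ 0 := by exact_mod_cast hN.ne'
  have hη (w : ℂ) (hw : 0 < w.im) :
      ModularForm.eta (-1 / w) = (sqrt I)⁻¹ * (sqrt w * ModularForm.eta w) := by
    simpa using! ModularForm.eta_comp_eq_csqrt_I_inv
      (show w ∈ UpperHalfPlane.upperHalfPlaneSet from hw)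
  have hdiv : N * (-1 / (N * z)) = -1 / z := by field_simp
  have hI : (sqrt I)⁻¹ * (sqrt I)⁻¹ = -I := by rw [← mul_inv, csqrt_mul_self, inv_I]
  have hsqrt : sqrt (N * z) * sqrt z = √N * z := by
    have := csqrt_ofReal_mul (r := N) (by exact_mod_cast hN) hz0
    rw [ofReal_natCast] at this
    rw [this, mul_assoc, csqrt_mul_self]
  have hprod : ModularForm.eta (-1 / (N * z)) * ModularForm.eta (N * (-1 / (N * z))) =
      -I * √N * z * (ModularForm.eta z * ModularForm.eta (N * z)) := by
    rw [hdiv, hη z hz, hη (N * z) (by simpa using by positivity)]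
    calc _ = ((sqrt I)⁻¹ * (sqrt I)⁻¹) * (sqrt (N * z) * sqrt z) *
          (ModularForm.eta z * ModularForm.eta (N * z)) := by ring
      _ = _ := by rw [hI, hsqrt]; ring
  have hne : -I * √N * z ≠ 0 := by simp [hz0, hN.ne']
  rw [etaProdInv, etaProdInv, hprod, mul_inv (-I * √N * z), mul_inv_cancel_left₀ hne]

lemma norm_etaProdInv_sq_mul_im_eq {N : ℕ} (hN : 0 < N) {z z' w w' : ℍ} (hz' : (z' : ℂ) = N * z)
    (hw' : (w' : ℂ) = N * w)
    (h : ‖ModularForm.eta w‖ ^ 4 * w.im * (‖ModularForm.eta w'‖ ^ 4 * w'.im) =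
      ‖ModularForm.eta z‖ ^ 4 * z.im * (‖ModularForm.eta z'‖ ^ 4 * z'.im)) :
    ‖etaProdInv N w‖ ^ 2 * z.im = ‖etaProdInv N z‖ ^ 2 * w.im := by
  have key {z z' : ℍ} (hz' : (z' : ℂ) = N * z) : (‖etaProdInv N z‖ ^ 2)⁻¹ ^ 2 * z.im ^ 2 * N =
      ‖ModularForm.eta z‖ ^ 4 * z.im * (‖ModularForm.eta z'‖ ^ 4 * z'.im) := by
    have him : z'.im = N * z.im := by simpa using congrArg im hz'
    rw [etaProdInv, ← hz', him, norm_inv, norm_mul]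
    simp only [inv_pow, inv_inv]
    ring
  have hF (z : ℍ) : 0 < ‖etaProdInv N z‖ ^ 2 := by
    have : 0 < ((N : ℂ) * z).im := by simpa using mul_pos (Nat.cast_pos.2 hN) z.im_pos
    have hne := mul_ne_zero (ModularForm.eta_ne_zero z.2) (ModularForm.eta_ne_zero this)
    exact pow_pos (norm_pos_iff.2 (inv_ne_zero hne)) 2
  have hz := z.im_pos
  have hw := w.im_pos
  rw [← key hz', ← key hw', mul_left_inj' (by exact_mod_cast hN.ne'), ← mul_pow, ← mul_pow,
    pow_left_inj₀ (by positivity) (by positivity) two_ne_zero] at h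
  rw [inv_mul_eq_div, inv_mul_eq_div, div_eq_div_iff (hF w).ne' (hF z).ne'] at h
  linarith

/-- For `N` prime and `c`, `d` coprime, the height of `z` above the cusp `-d / c` of `Γ₀(N)`, i.e.
its imaginary part after moving that cusp to `∞` by an element of `Γ₀(N)` or a Fricke conjugate.
It governs the size of `etaProdInv N z` near the cusp. -/
noncomputable def cuspHeight (N : ℕ) (c d : ℤ) (z : ℂ) : ℝ :=
  z.im / ((if (N : ℤ) ∣ c then 1 else (N : ℝ)) * normSq (c * z + d))

lemma exists_dvd_T_zpow_mul_apply_zero_zero {N : ℕ} (hN : N.Prime) {g : SL(2, ℤ)}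
    (hg : ¬(N : ℤ) ∣ g 1 0) : ∃ j : ℤ, (N : ℤ) ∣ (ModularGroup.T ^ j * g) 0 0 := by
  obtain ⟨u, v, huv⟩ := (Nat.prime_iff_prime_int.1 hN).coprime_iff_not_dvd.2 hg
  refine ⟨-g 0 0 * v, g 0 0 * u, ?_⟩
  simp only [Matrix.SpecialLinearGroup.coe_mul, ModularGroup.coe_T_zpow, Matrix.mul_apply,
    Fin.sum_univ_two, Matrix.of_apply, Matrix.cons_val', Matrix.cons_val_zero, Matrix.cons_val_one]
  linear_combination -g 0 0 * huv

lemma exists_norm_etaProdInv_sq_mul_im_eq {N : ℕ} (hN : N.Prime) (z : ℍ) :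
    ∃ (w : ℍ) (c d : ℤ), IsCoprime c d ∧ w.im = cuspHeight N c d z ∧ 3 / 4 ≤ N * w.im ∧
      ‖etaProdInv N w‖ ^ 2 * z.im = ‖etaProdInv N z‖ ^ 2 * w.im := by
  obtain ⟨g, hg⟩ := ModularGroup.exists_smul_mem_fd z
  have hheight : 3 / 4 ≤ (g • z).im := by
    nlinarith [ModularGroup.three_le_four_mul_im_sq_of_mem_fd hg, (g • z).im_pos]
  have him (g : SL(2, ℤ)) : (g • z).im = z.im / normSq (g 1 0 * z + g 1 1) := by
    rw [ModularGroup.im_smul_eq_div_normSq, ModularGroup.denom_apply]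
  have hNpos : (0 : ℝ) < N := by exact_mod_cast hN.pos
  obtain ⟨z', hz'⟩ : ∃ z' : ℍ, (z' : ℂ) = N * z :=
    ⟨⟨N * z, by simpa using mul_pos hNpos z.im_pos⟩, rfl⟩
  by_cases hc : (N : ℤ) ∣ g 1 0
  · obtain ⟨g', hg'⟩ := exists_coe_smul_eq_natCast_mul hz' hc
    refine ⟨g • z, g 1 0, g 1 1, ModularGroup.bottom_row_coprime g, ?_, ?_,
      norm_etaProdInv_sq_mul_im_eq hN.pos hz' hg' ?_⟩
    · rw [him, cuspHeight, if_pos hc, one_mul, UpperHalfPlane.coe_im]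
    · nlinarith [(by exact_mod_cast hN.one_le : (1 : ℝ) ≤ N)]
    · rw [norm_eta_pow_four_mul_im_smul, norm_eta_pow_four_mul_im_smul]
  · -- a translation makes `N` divide the top left entry, and dividing by `N` is then modular
    obtain ⟨j, hj⟩ := exists_dvd_T_zpow_mul_apply_zero_zero hN hc
    obtain ⟨g', hg'⟩ := exists_natCast_mul_coe_smul_eq hz' hj
    have himT : ((ModularGroup.T ^ j * g) • z).im = (g • z).im := by
      rw [him, him, ModularGroup.T_pow_mul_apply_one]
    have himw : (g • z).im = N * (g' • z').im := by
      rw [← himT]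
      simpa using (congrArg im hg').symm
    refine ⟨g' • z', g 1 0, g 1 1, ModularGroup.bottom_row_coprime g, ?_, himw ▸ hheight,
      norm_etaProdInv_sq_mul_im_eq hN.pos hz' hg'.symm ?_⟩
    · rw [cuspHeight, if_neg hc, UpperHalfPlane.coe_im, ← div_div, div_right_comm, ← him,
        himw, mul_div_cancel_left₀ _ hNpos.ne']
    · rw [norm_eta_pow_four_mul_im_smul, norm_eta_pow_four_mul_im_smul, mul_comm]

lemma norm_qParam_one_neg (z : ℂ) : ‖𝕢 1 (-z)‖ = Real.exp (2 * π * z.im) := by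
  rw [norm_qParam_one, neg_im]
  ring_nf

lemma exists_norm_etaProdInv_le :
    ∃ C, 0 ≤ C ∧ ∀ z : ℂ, 0 < z.im → z.im ≤ 1 → ∃ c d : ℤ, IsCoprime c d ∧
      3 / 92 ≤ cuspHeight 23 c d z ∧
      ‖etaProdInv 23 z‖ ≤ C * Real.exp (2 * π * cuspHeight 23 c d z) := by
  obtain ⟨B, hB⟩ := exists_norm_etaProdInv_sub_le (δ := 3 / 92) (by norm_num)
  have hB0 : 0 ≤ B := (norm_nonneg _).trans (hB I (by norm_num))
  refine ⟨6 * (B + 1), by positivity, fun z hz hz1 ↦ ?_⟩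
  obtain ⟨w, c, d, hcd, hw, hw34, hnorm⟩ :=
    exists_norm_etaProdInv_sq_mul_im_eq (N := 23) (by norm_num) ⟨z, hz⟩
  simp only [UpperHalfPlane.mk_im] at hw hnorm
  have hwim : 3 / 92 ≤ w.im := by norm_num at hw34; linarith
  refine ⟨c, d, hcd, hw ▸ hwim, ?_⟩
  rw [← hw]
  have hexp : 1 ≤ Real.exp (2 * π * w.im) := Real.one_le_exp (by positivity)
  have hFw : ‖etaProdInv 23 w‖ ≤ (B + 1) * Real.exp (2 * π * w.im) := by
    have h := norm_le_norm_add_norm_sub' (etaProdInv 23 w) (𝕢 1 (-w))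
    rw [norm_qParam_one_neg, UpperHalfPlane.coe_im] at h
    nlinarith [hB w hwim]
  have hsq : ‖etaProdInv 23 z‖ ^ 2 ≤ (6 * ‖etaProdInv 23 w‖) ^ 2 := by
    nlinarith [sq_nonneg ‖etaProdInv 23 z‖, sq_nonneg ‖etaProdInv 23 w‖]
  calc ‖etaProdInv 23 z‖ ≤ 6 * ‖etaProdInv 23 w‖ :=
      (pow_le_pow_iff_left₀ (norm_nonneg _) (by positivity) two_ne_zero).1 hsq
    _ ≤ 6 * ((B + 1) * Real.exp (2 * π * w.im)) := by gcongr
    _ = _ := by ring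

end EtaQuotient

section CuspHeight

open Complex

lemma cuspHeight_neg (N : ℕ) (c d : ℤ) (z : ℂ) : cuspHeight N (-c) (-d) z = cuspHeight N c d z := by
  have : ((-c : ℤ) : ℂ) * z + (-d : ℤ) = -(c * z + d) := by push_cast; ring
  simp only [cuspHeight, this, normSq_neg, dvd_neg]

lemma normSq_intCast_mul_add_intCast (c d : ℤ) (z : ℂ) :
    normSq (c * z + d) = (c * z.re + d) ^ 2 + (c * z.im) ^ 2 := by
  rw [normSq_apply]
  simp only [add_re, mul_re, add_im, mul_im, intCast_re, intCast_im, zero_mul, sub_zero, add_zero]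
  ring

lemma cuspHeight_le_one_div {N : ℕ} {k : ℝ} (hk : 0 < k) {c : ℤ}
    (hc : k ≤ (if (N : ℤ) ∣ c then 1 else (N : ℝ)) * c ^ 2) (d : ℤ) {z : ℂ} (hz : 0 < z.im) :
    cuspHeight N c d z ≤ 1 / (k * z.im) := by
  have hden : k * z.im ^ 2 ≤ (if (N : ℤ) ∣ c then 1 else (N : ℝ)) * normSq (c * z + d) := by
    calc k * z.im ^ 2 ≤ (if (N : ℤ) ∣ c then 1 else (N : ℝ)) * c ^ 2 * z.im ^ 2 := by gcongr
      _ ≤ _ := by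
        rw [normSq_intCast_mul_add_intCast, mul_assoc, ← mul_pow]
        gcongr
        exact le_add_of_nonneg_left (sq_nonneg _)
  calc cuspHeight N c d z ≤ z.im / (k * z.im ^ 2) := by rw [cuspHeight]; gcongr
    _ = 1 / (k * z.im) := by field_simp

lemma cuspHeight_le_im {N : ℕ} {c d : ℤ} {z : ℂ} (hz : 0 ≤ z.im)
    (h : 1 ≤ (if (N : ℤ) ∣ c then 1 else (N : ℝ)) * (c * z.re + d) ^ 2) :
    cuspHeight N c d z ≤ z.im := by
  refine div_le_self hz (h.trans ?_)
  rw [normSq_intCast_mul_add_intCast]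
  gcongr
  exact le_add_of_nonneg_right (sq_nonneg _)

lemma one_le_four_mul_sq_of_abs_le {c d : ℤ} {x : ℝ} (hd : d ≠ 0) (hcd : |c| ≤ |d|)
    (hx : |x| ≤ 1 / 2) : 1 ≤ 4 * (c * x + d) ^ 2 := by
  have hd1 : (1 : ℝ) ≤ |(d : ℝ)| := by exact_mod_cast Int.one_le_abs hd
  have hcdR : |(c : ℝ)| ≤ |(d : ℝ)| := by exact_mod_cast hcd
  have hcx : |c * x| ≤ |(d : ℝ)| / 2 := by
    rw [abs_mul]
    nlinarith [abs_nonneg x, abs_nonneg (c : ℝ)]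
  have htriangle : |(d : ℝ)| ≤ |c * x + d| + |c * x| := by
    simpa using abs_sub (c * x + d) (c * x)
  nlinarith [sq_abs (c * x + d)]

lemma eq_one_and_eq_zero_or_eq_two {c d : ℤ} (hcd : IsCoprime c d) (hc : 0 ≤ c) (hc3 : c < 3)
    (hd : d = 0 ∨ |d| < |c|) : c = 1 ∧ d = 0 ∨ c = 2 ∧ |d| = 1 := by
  have hd2 : |d| ≤ 2 := by
    rw [abs_of_nonneg hc] at hd
    rcases hd with rfl | hd
    · simp
    · lia
  obtain ⟨hdl, hdu⟩ := abs_le.1 hd2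
  interval_cases c <;> interval_cases d <;> simp_all [Int.isCoprime_iff_gcd_eq_one]

lemma cuspHeight_cases {c d : ℤ} (hcd : IsCoprime c d) {z : ℂ} (hre : |z.re| ≤ 1 / 2)
    (him : 0 < z.im) :
    cuspHeight 23 c d z = cuspHeight 23 1 0 z ∨ cuspHeight 23 c d z ≤ z.im ∨
      cuspHeight 23 c d z ≤ 1 / (207 * z.im) ∨
      ∃ s : ℝ, |s| = 1 / 2 ∧ cuspHeight 23 c d z = z.im / (92 * ((z.re + s) ^ 2 + z.im ^ 2)) := by
  wlog hc : 0 ≤ c generalizing c d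
  · simpa only [cuspHeight_neg] using this hcd.neg_neg (by lia)
  by_cases hc3 : 3 ≤ c
  · refine .inr (.inr (.inl (cuspHeight_le_one_div (by norm_num) ?_ d him)))
    have hcR : (3 : ℝ) ≤ c := by exact_mod_cast hc3
    split_ifs with hdvd
    · have : (23 : ℝ) ≤ c := by exact_mod_cast Int.le_of_dvd (by lia) hdvd
      nlinarith
    · push_cast
      nlinarith
  by_cases hd : d ≠ 0 ∧ |c| ≤ |d|
  · refine .inr (.inl (cuspHeight_le_im him.le ?_))
    have := one_le_four_mul_sq_of_abs_le hd.1 hd.2 hre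
    split_ifs with hdvd
    · obtain rfl : c = 0 := Int.eq_zero_of_dvd_of_nonneg_of_lt hc (by lia) hdvd
      have : (1 : ℝ) ≤ |(d : ℝ)| := by exact_mod_cast Int.one_le_abs hd.1
      simpa using this
    · push_cast
      linarith
  obtain ⟨rfl, rfl⟩ | ⟨rfl, hd1⟩ :=
    eq_one_and_eq_zero_or_eq_two hcd hc (not_le.1 hc3) (by by_contra! h; exact hd h)
  · exact .inl rfl
  · refine .inr (.inr (.inr ⟨d / 2, ?_, ?_⟩))
    · rw [abs_div]
      norm_num
      exact_mod_cast hd1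
    · rw [cuspHeight, if_neg (by norm_num), normSq_intCast_mul_add_intCast]
      push_cast
      ring_nf

end CuspHeight

section PolarPart

open Complex

/-- The image of the polar part `q⁻¹` of `etaProdInv N` under the Fricke involution, which is the
singular part of `etaProdInv N` at the cusp `0`. -/
noncomputable def etaProdInvPolar (N : ℕ) (z : ℂ) : ℂ := -I * √N * z * 𝕢 1 (1 / (N * z))

lemma im_neg_one_div_natCast_mul (N : ℕ) (z : ℂ) :
    (-1 / (N * z)).im = z.im / (N * normSq z) := by
  rcases eq_or_ne N 0 with rfl | hN
  · simp
  · have : (N : ℝ) ≠ 0 := Nat.cast_ne_zero.2 hN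
    simp only [div_eq_mul_inv, mul_inv_rev, neg_mul, one_mul, neg_im, mul_im, inv_re, inv_im,
      natCast_re, natCast_im, normSq_natCast, neg_zero, zero_mul, mul_zero, zero_add, neg_neg]
    field_simp

lemma norm_etaProdInvPolar (N : ℕ) (z : ℂ) :
    ‖etaProdInvPolar N z‖ = √N * ‖z‖ * Real.exp (2 * π * (z.im / (N * normSq z))) := by
  rw [etaProdInvPolar, norm_mul, show 1 / (N * z) = -(-1 / (N * z)) by ring, norm_qParam_one_neg,
    im_neg_one_div_natCast_mul]
  simp [abs_of_nonneg (Real.sqrt_nonneg _)]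

lemma cuspHeight_one_zero {N : ℕ} (hN : N ≠ 1) (z : ℂ) :
    cuspHeight N 1 0 z = z.im / (N * normSq z) := by
  rw [cuspHeight, if_neg (by simpa [Int.natCast_dvd] using hN)]
  simp

lemma etaProdInv_sub_polar {N : ℕ} (hN : 0 < N) {z : ℂ} (hz : 0 < z.im) :
    etaProdInv N z - etaProdInvPolar N z =
      -I * √N * z * (etaProdInv N (-1 / (N * z)) - 𝕢 1 (-(-1 / (N * z)))) := by
  rw [etaProdInv_eq_mul_etaProdInv_fricke hN hz, etaProdInvPolar,
    show 1 / (N * z) = -(-1 / (N * z)) by ring, mul_sub]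

/-- A majorant on the segment `|x| ≤ 1 / 2` for `etaProdInv 23` minus its polar part, with
`A = π / 46`: the cusps `± 1 / 2` are the next ones in size after `0`, and every other cusp
contributes at most `exp (A / (2 * y))`. -/
noncomputable def cuspMajorant (A y x : ℝ) : ℝ :=
  Real.exp (A / (2 * y)) + Real.exp (A * (y / ((x + 1 / 2) ^ 2 + y ^ 2))) +
    Real.exp (A * (y / ((x - 1 / 2) ^ 2 + y ^ 2)))

lemma one_le_cuspMajorant {A y : ℝ} (hA : 0 ≤ A) (hy : 0 ≤ y) (x : ℝ) : 1 ≤ cuspMajorant A y x := by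
  have : 1 ≤ Real.exp (A / (2 * y)) := Real.one_le_exp (by positivity)
  rw [cuspMajorant, add_assoc]
  exact le_add_of_le_of_nonneg this (by positivity)

lemma exp_cuspHeight_le_cuspMajorant {c d : ℤ} (hcd : IsCoprime c d) {z : ℂ}
    (hre : |z.re| ≤ 1 / 2) (him : 0 < z.im) (him1 : z.im ≤ 1)
    (hne : cuspHeight 23 c d z ≠ cuspHeight 23 1 0 z) :
    Real.exp (2 * π * cuspHeight 23 c d z) ≤
      Real.exp (2 * π) * cuspMajorant (π / 46) z.im z.re := by
  have hM := one_le_cuspMajorant (A := π / 46) (by positivity) him.le z.re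
  have hexp : 1 ≤ Real.exp (2 * π) := Real.one_le_exp (by positivity)
  obtain heq | hle | hle | ⟨s, hs, heq⟩ := cuspHeight_cases hcd hre him
  · exact absurd heq hne
  · calc Real.exp (2 * π * cuspHeight 23 c d z) ≤ Real.exp (2 * π * 1) := by
          gcongr
          exact hle.trans him1
      _ ≤ _ := by rw [mul_one]; exact le_mul_of_one_le_right (Real.exp_pos _).le hM
  all_goals refine le_trans ?_ (le_mul_of_one_le_left (zero_le_one.trans hM) hexp)
  · have hexponent : 2 * π * cuspHeight 23 c d z ≤ π / 46 / (2 * z.im) :=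
      calc 2 * π * cuspHeight 23 c d z ≤ 2 * π * (1 / (207 * z.im)) := by gcongr
        _ ≤ 2 * π * (1 / (184 * z.im)) := by gcongr; norm_num
        _ = π / 46 / (2 * z.im) := by field_simp; norm_num
    rw [cuspMajorant, add_assoc]
    exact le_add_of_le_of_nonneg (Real.exp_le_exp.2 hexponent) (by positivity)
  · have hexponent : 2 * π * cuspHeight 23 c d z =
        π / 46 * (z.im / ((z.re + s) ^ 2 + z.im ^ 2)) := by
      rw [heq, mul_comm (92 : ℝ), ← div_div]
      ring
    rw [hexponent, cuspMajorant]
    obtain rfl | rfl := (abs_eq (by norm_num)).1 hs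
    · linarith [Real.exp_pos (π / 46 / (2 * z.im)),
        Real.exp_pos (π / 46 * (z.im / ((z.re - 1 / 2) ^ 2 + z.im ^ 2)))]
    · rw [← sub_eq_add_neg]
      exact le_add_of_nonneg_left (by positivity)

lemma exists_norm_etaProdInv_sub_polar_le :
    ∃ C, 0 ≤ C ∧ ∀ z : ℂ, |z.re| ≤ 1 / 2 → 0 < z.im → z.im ≤ 1 →
      ‖etaProdInv 23 z - etaProdInvPolar 23 z‖ ≤ C * cuspMajorant (π / 46) z.im z.re := by
  obtain ⟨B, hB⟩ := exists_norm_etaProdInv_sub_le (δ := 3 / 92) (by norm_num)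
  obtain ⟨K, hK0, hK⟩ := exists_norm_etaProdInv_le
  have hB0 : 0 ≤ B := (norm_nonneg _).trans (hB I (by norm_num))
  refine ⟨10 * B + (K + 10) * Real.exp (2 * π), by positivity, fun z hre him him1 ↦ ?_⟩
  have hM := one_le_cuspMajorant (A := π / 46) (by positivity) him.le z.re
  have hz : ‖z‖ ≤ 2 := by
    linarith [norm_le_abs_re_add_abs_im z, abs_of_pos him]
  have hsqrt : √(23 : ℕ) ≤ 5 := Real.sqrt_le_left (by norm_num) |>.2 (by norm_num)
  have hpre : √(23 : ℕ) * ‖z‖ ≤ 10 := by nlinarith [norm_nonneg z]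
  have hheight := cuspHeight_one_zero (N := 23) (by norm_num) z
  rcases le_or_gt (3 / 92) (cuspHeight 23 1 0 z) with hlarge | hsmall
  · have hw := hB (-1 / ((23 : ℕ) * z)) (by rwa [im_neg_one_div_natCast_mul, ← hheight])
    have hnorm : ‖etaProdInv 23 z - etaProdInvPolar 23 z‖ ≤ 10 * B := by
      rw [etaProdInv_sub_polar (by norm_num) him, norm_mul]
      refine mul_le_mul ?_ hw (norm_nonneg _) (by norm_num)
      simpa [abs_of_nonneg (Real.sqrt_nonneg _)] using hpre
    nlinarith [mul_nonneg hK0 (Real.exp_pos (2 * π)).le, Real.exp_pos (2 * π)]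
  · obtain ⟨c, d, hcd, hcd_le, hF⟩ := hK z him him1
    have hcusp := exp_cuspHeight_le_cuspMajorant hcd hre him him1 (hsmall.trans_le hcd_le).ne'
    have hG : ‖etaProdInvPolar 23 z‖ ≤ 10 * Real.exp (2 * π) := by
      rw [norm_etaProdInvPolar, ← hheight]
      exact mul_le_mul hpre (Real.exp_le_exp.2 (by nlinarith [Real.pi_pos])) (Real.exp_pos _).le
        (by norm_num)
    have hFM := hF.trans (mul_le_mul_of_nonneg_left hcusp hK0)
    nlinarith [norm_sub_le (etaProdInv 23 z) (etaProdInvPolar 23 z), Real.exp_pos (2 * π)]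

end PolarPart

section MajorantIntegral

open MeasureTheory

lemma exp_mul_div_sq_add_sq_le {A y : ℝ} (hA : 0 ≤ A) (hy : 0 < y) (u : ℝ) :
    Real.exp (A * (y / (u ^ 2 + y ^ 2))) ≤
      Real.exp (A / y) * Real.exp (-(A / (2 * y ^ 3)) * u ^ 2) + Real.exp (A / (2 * y)) := by
  rcases le_or_gt (u ^ 2) (y ^ 2) with h | h
  · refine le_add_of_le_of_nonneg ?_ (Real.exp_pos _).le
    have hle : y / (u ^ 2 + y ^ 2) ≤ 1 / y - u ^ 2 / (2 * y ^ 3) := by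
      rw [div_sub_div _ _ hy.ne' (by positivity), div_le_div_iff₀ (by positivity) (by positivity)]
      nlinarith [mul_nonneg (mul_nonneg hy.le (sq_nonneg u)) (sub_nonneg.2 h)]
    rw [← Real.exp_add, Real.exp_le_exp]
    calc A * (y / (u ^ 2 + y ^ 2)) ≤ A * (1 / y - u ^ 2 / (2 * y ^ 3)) := by gcongr
      _ = A / y + -(A / (2 * y ^ 3)) * u ^ 2 := by ring
  · refine le_add_of_nonneg_of_le (by positivity) (Real.exp_le_exp.2 ?_)
    calc A * (y / (u ^ 2 + y ^ 2)) ≤ A * (y / (y ^ 2 + y ^ 2)) := by gcongr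
      _ = A / (2 * y) := by field_simp; norm_num

lemma intervalIntegral_gaussian_add_right_le {b : ℝ} (hb : 0 < b) (s : ℝ) {l u : ℝ} (hlu : l ≤ u) :
    ∫ x in l..u, Real.exp (-b * (x + s) ^ 2) ≤ √(π / b) := by
  rw [← integral_gaussian b, ← integral_add_right_eq_self (fun x ↦ Real.exp (-b * x ^ 2)) s,
    intervalIntegral.integral_of_le hlu]
  exact setIntegral_le_integral ((integrable_exp_neg_mul_sq hb).comp_add_right s)
    (.of_forall fun x ↦ (Real.exp_pos _).le)

lemma continuous_exp_mul_div_sq_add_sq (A s : ℝ) {y : ℝ} (hy : y ≠ 0) :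
    Continuous fun x : ℝ ↦ Real.exp (A * (y / ((x + s) ^ 2 + y ^ 2))) := by
  have hne (x : ℝ) : (x + s) ^ 2 + y ^ 2 ≠ 0 := by positivity
  fun_prop (disch := exact hne _)

lemma integral_exp_mul_div_sq_add_sq_le {A y : ℝ} (hA : 0 < A) (hy : 0 < y) (s : ℝ) :
    ∫ x in (-(1 / 2) : ℝ)..(1 / 2), Real.exp (A * (y / ((x + s) ^ 2 + y ^ 2))) ≤
      √(2 * π / A) * √y ^ 3 * Real.exp (A / y) + Real.exp (A / (2 * y)) := by
  have hgauss : Continuous fun x : ℝ ↦ Real.exp (-(A / (2 * y ^ 3)) * (x + s) ^ 2) := by fun_prop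
  have hwidth : √(π / (A / (2 * y ^ 3))) = √(2 * π / A) * √y ^ 3 := by
    rw [show π / (A / (2 * y ^ 3)) = 2 * π / A * y ^ 3 by field_simp, Real.sqrt_mul (by positivity),
      ← Real.sqrt_sq (by positivity : 0 ≤ √y ^ 3), pow_right_comm, Real.sq_sqrt hy.le]
  calc ∫ x in (-(1 / 2) : ℝ)..(1 / 2), Real.exp (A * (y / ((x + s) ^ 2 + y ^ 2)))
      ≤ ∫ x in (-(1 / 2) : ℝ)..(1 / 2), (Real.exp (A / y) *
          Real.exp (-(A / (2 * y ^ 3)) * (x + s) ^ 2) + Real.exp (A / (2 * y))) := by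
        refine intervalIntegral.integral_mono_on (by norm_num)
          ((continuous_exp_mul_div_sq_add_sq A s hy.ne').intervalIntegrable _ _)
          (Continuous.intervalIntegrable (by fun_prop) _ _) fun x _ ↦ ?_
        exact exp_mul_div_sq_add_sq_le hA.le hy (x + s)
    _ = Real.exp (A / y) * (∫ x in (-(1 / 2) : ℝ)..(1 / 2),
          Real.exp (-(A / (2 * y ^ 3)) * (x + s) ^ 2)) + Real.exp (A / (2 * y)) := by
        rw [intervalIntegral.integral_add ((hgauss.const_mul _).intervalIntegrable _ _)
          (by simp), intervalIntegral.integral_const_mul, intervalIntegral.integral_const]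
        norm_num
    _ ≤ Real.exp (A / y) * √(π / (A / (2 * y ^ 3))) + Real.exp (A / (2 * y)) := by
        gcongr
        exact intervalIntegral_gaussian_add_right_le (by positivity) s (by norm_num)
    _ = √(2 * π / A) * √y ^ 3 * Real.exp (A / y) + Real.exp (A / (2 * y)) := by
        rw [hwidth, mul_comm]

lemma exp_div_two_mul_le {A y : ℝ} (hA : 0 < A) (hy : 0 < y) (hy1 : y ≤ 1) :
    Real.exp (A / (2 * y)) ≤ 8 / A ^ 2 * √y ^ 3 * Real.exp (A / y) := by
  have hsq : y ^ 2 ≤ √y ^ 3 := by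
    have hle : √y ≤ 1 := Real.sqrt_le_one.2 hy1
    calc y ^ 2 = √y ^ 3 * √y := by rw [← pow_succ, show √y ^ 4 = (√y ^ 2) ^ 2 by ring,
          Real.sq_sqrt hy.le]
      _ ≤ √y ^ 3 := mul_le_of_le_one_right (by positivity) hle
  have hone : 1 ≤ 8 / A ^ 2 * √y ^ 3 * Real.exp (A / (2 * y)) := by
    calc 1 = 8 / A ^ 2 * y ^ 2 * ((A / (2 * y)) ^ 2 / 2) := by field_simp; norm_num
      _ ≤ 8 / A ^ 2 * √y ^ 3 * Real.exp (A / (2 * y)) := by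
        gcongr
        have := Real.quadratic_le_exp_of_nonneg (x := A / (2 * y)) (by positivity)
        nlinarith [show 0 < A / (2 * y) by positivity]
  calc Real.exp (A / (2 * y))
      ≤ 8 / A ^ 2 * √y ^ 3 * Real.exp (A / (2 * y)) * Real.exp (A / (2 * y)) :=
        le_mul_of_one_le_left (Real.exp_pos _).le hone
    _ = 8 / A ^ 2 * √y ^ 3 * Real.exp (A / y) := by
        rw [mul_assoc, ← Real.exp_add]
        congr 2
        ring

lemma continuous_cuspMajorant (A : ℝ) {y : ℝ} (hy : y ≠ 0) : Continuous (cuspMajorant A y) :=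
  (continuous_const.add (continuous_exp_mul_div_sq_add_sq A (1 / 2) hy)).add
    (continuous_exp_mul_div_sq_add_sq A (-(1 / 2)) hy)

lemma exists_integral_cuspMajorant_le {A : ℝ} (hA : 0 < A) :
    ∃ C, ∀ y : ℝ, 0 < y → y ≤ 1 →
      ∫ x in (-(1 / 2) : ℝ)..(1 / 2), cuspMajorant A y x ≤ C * (√y ^ 3 * Real.exp (A / y)) := by
  refine ⟨2 * √(2 * π / A) + 3 * (8 / A ^ 2), fun y hy hy1 ↦ ?_⟩
  have hint (s : ℝ) := (continuous_exp_mul_div_sq_add_sq A s hy.ne').intervalIntegrable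
    (μ := volume) (-(1 / 2)) (1 / 2)
  have hsplit : ∫ x in (-(1 / 2) : ℝ)..(1 / 2), cuspMajorant A y x = Real.exp (A / (2 * y)) +
      (∫ x in (-(1 / 2) : ℝ)..(1 / 2), Real.exp (A * (y / ((x + 1 / 2) ^ 2 + y ^ 2)))) +
      ∫ x in (-(1 / 2) : ℝ)..(1 / 2), Real.exp (A * (y / ((x + -(1 / 2)) ^ 2 + y ^ 2))) := by
    simp only [cuspMajorant, sub_eq_add_neg _ (1 / 2 : ℝ)]
    rw [intervalIntegral.integral_add (intervalIntegrable_const.add (hint _)) (hint _),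
      intervalIntegral.integral_add (by simp) (hint _), intervalIntegral.integral_const]
    norm_num
  linarith [integral_exp_mul_div_sq_add_sq_le hA hy (1 / 2), exp_div_two_mul_le hA hy hy1,
    integral_exp_mul_div_sq_add_sq_le hA hy (-(1 / 2))]

end MajorantIntegral

section PolarIntegral

open Complex

lemma circleIntegral_etaProdInvPolar_mul_qParam {N n : ℕ} (hN : 0 < N) (hn : 0 < n) {R : ℝ}
    (hR : 0 < R) : ∮ z in C(0, R), etaProdInvPolar N z * 𝕢 1 (-(n * z)) =
      -((2 * π / (n * √N) * I2 (4 * π * √n / √N) : ℝ) : ℂ) := by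
  have hN0 : (N : ℂ) ≠ 0 := Nat.cast_ne_zero.2 hN.ne'
  have hn0 : (n : ℂ) ≠ 0 := Nat.cast_ne_zero.2 hn.ne'
  have hπ : (π : ℂ) ≠ 0 := ofReal_ne_zero.2 Real.pi_ne_zero
  have hsqrt : (√N : ℂ) ^ 2 = N := by exact_mod_cast Real.sq_sqrt N.cast_nonneg
  have hsqrt0 : (√N : ℂ) ≠ 0 := by simp [hN.ne']
  have hab : 2 * π * I / N * (-(2 * π * I * n)) = ((4 * π * √n / √N / 2) ^ 2 : ℝ) := by
    have hsqrtn : (√n : ℂ) ^ 2 = n := by exact_mod_cast Real.sq_sqrt n.cast_nonneg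
    push_cast
    rw [div_pow, div_pow, mul_pow, hsqrt, hsqrtn]
    linear_combination (-(4 * π ^ 2 * n / N) : ℂ) * I_sq
  have hintegrand (z : ℂ) : etaProdInvPolar N z * 𝕢 1 (-(n * z)) =
      -I * √N * (cexp (-(2 * π * I * n) * z) * (cexp (2 * π * I / N / z) * z)) := by
    simp only [etaProdInvPolar, Function.Periodic.qParam]
    rw [show 2 * π * I * (1 / (N * z)) / (1 : ℝ) = 2 * π * I / N / z by push_cast; field_simp,
      show 2 * π * I * -(n * z) / (1 : ℝ) = -(2 * π * I * n) * z by push_cast; ring]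
    ring
  simp_rw [hintegrand]
  rw [circleIntegral.integral_const_mul,
    circleIntegral_exp_mul_self_eq_I2 hR (by simp [hπ, hn0]) hab]
  push_cast
  field_simp
  rw [I_sq, hsqrt]
  ring

lemma norm_etaProdInvPolar_mul_qParam_le {N : ℕ} (n : ℕ) {y : ℝ} (hy : y ≤ 1) {w : ℂ}
    (hw : w.im ≤ y) (hlow : 1 / 2 ≤ ‖w‖) :
    ‖etaProdInvPolar N w * 𝕢 1 (-(n * w))‖ ≤
      √N * ‖w‖ * Real.exp (8 * π / N) * Real.exp (2 * π * n * y) := by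
  have hsq : 1 / 4 ≤ normSq w := by rw [normSq_eq_norm_sq]; nlinarith
  have hpolar : 2 * π * (w.im / (N * normSq w)) ≤ 8 * π / N := by
    calc 2 * π * (w.im / (N * normSq w)) = 2 * π / N * (w.im / normSq w) := by
          rw [← div_div, div_right_comm]; ring
      _ ≤ 2 * π / N * 4 := by
        gcongr
        rw [div_le_iff₀ (by linarith)]
        linarith
      _ = 8 * π / N := by ring
  have him : 2 * π * (n * w).im ≤ 2 * π * n * y := by
    rw [show (n * w).im = n * w.im by simp, ← mul_assoc]
    gcongr
  rw [norm_mul, norm_etaProdInvPolar, norm_qParam_one_neg]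
  gcongr

lemma norm_integral_etaProdInvPolar_sub_le {N n : ℕ} (hN : 0 < N) (hn : 0 < n) {y : ℝ}
    (hy : 0 < y) (hy1 : y ≤ 1) :
    ‖(∫ x in (-(1 / 2) : ℝ)..(1 / 2), etaProdInvPolar N (x + y * I) * 𝕢 1 (-(n * (x + y * I)))) -
      ((2 * π / (n * √N) * I2 (4 * π * √n / √N) : ℝ) : ℂ)‖ ≤
      8 * π * √N * Real.exp (8 * π / N) * Real.exp (2 * π * n * y) := by
  set z : ℂ := ⟨1 / 2, y⟩
  have hzlow : 1 / 2 ≤ ‖z‖ := (abs_re_le_norm z).trans' (by norm_num [z])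
  have hzup : ‖z‖ ≤ 2 :=
    (norm_le_abs_re_add_abs_im z).trans (by norm_num [z, abs_of_pos hy]; linarith)
  have hdiff : DifferentiableOn ℂ (fun w ↦ etaProdInvPolar N w * 𝕢 1 (-(n * w))) {0}ᶜ := by
    intro w hw
    have hw0 : (N : ℂ) * w ≠ 0 := mul_ne_zero (Nat.cast_ne_zero.2 hN.ne') hw
    unfold etaProdInvPolar Function.Periodic.qParam
    fun_prop (disch := assumption)
  have h := norm_integral_segment_add_circleIntegral_le hdiff (z := z) (by norm_num [z]) hy
    (B := √N * 2 * Real.exp (8 * π / N) * Real.exp (2 * π * n * y)) fun w hw him ↦ by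
      refine (norm_etaProdInvPolar_mul_qParam_le n hy1 him (hw ▸ hzlow)).trans ?_
      gcongr
      exact hw ▸ hzup
  rw [circleIntegral_etaProdInvPolar_mul_qParam hN hn (by linarith), ← sub_eq_add_neg] at h
  refine h.trans ?_
  calc 2 * π * ‖z‖ * (√N * 2 * Real.exp (8 * π / N) * Real.exp (2 * π * n * y))
      ≤ 2 * π * 2 * (√N * 2 * Real.exp (8 * π / N) * Real.exp (2 * π * n * y)) := by gcongr
    _ = _ := by ring

end PolarIntegral

section Asymptotics

open Complex

lemma continuous_etaProdInv_horizontal {N : ℕ} (hN : 0 < N) {y : ℝ} (hy : 0 < y) :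
    Continuous fun x : ℝ ↦ etaProdInv N (x + y * I) := by
  refine continuous_iff_continuousAt.2 fun x ↦ ?_
  have hz : 0 < (x + y * I : ℂ).im := by simpa using hy
  have hNz : 0 < ((N : ℂ) * (x + y * I)).im := by simpa using by positivity
  have hη (z : ℂ) (hz : 0 < z.im) : ContinuousAt ModularForm.eta z :=
    (ModularForm.differentiableAt_eta_of_mem_upperHalfPlaneSet hz).continuousAt
  have hcont : ContinuousAt (fun z : ℂ ↦ etaProdInv N z) (x + y * I) :=
    ((hη _ hz).mul ((hη _ hNz).comp (f := fun z : ℂ ↦ N * z) (by fun_prop))).inv₀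
      (mul_ne_zero (ModularForm.eta_ne_zero hz) (ModularForm.eta_ne_zero hNz))
  exact hcont.comp (f := fun x : ℝ ↦ (x + y * I : ℂ)) (by fun_prop)

lemma exists_norm_integral_etaProdInv_sub_polar_le :
    ∃ C, ∀ (n : ℕ) (y : ℝ), 0 < y → y ≤ 1 →
      ‖∫ x in (-(1 / 2) : ℝ)..(1 / 2),
        (etaProdInv 23 (x + y * I) - etaProdInvPolar 23 (x + y * I)) * 𝕢 1 (-(n * (x + y * I)))‖ ≤
          C * √y ^ 3 * Real.exp (2 * π * n * y + π / (46 * y)) := by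
  obtain ⟨K, hK0, hK⟩ := exists_norm_etaProdInv_sub_polar_le
  obtain ⟨J, hJ⟩ := exists_integral_cuspMajorant_le (A := π / 46) (by positivity)
  refine ⟨K * J, fun n y hy hy1 ↦ ?_⟩
  have hbound (x : ℝ) (hx : x ∈ Set.Icc (-(1 / 2) : ℝ) (1 / 2)) :
      ‖(etaProdInv 23 (x + y * I) - etaProdInvPolar 23 (x + y * I)) * 𝕢 1 (-(n * (x + y * I)))‖ ≤
        K * Real.exp (2 * π * n * y) * cuspMajorant (π / 46) y x := by
    have hre : (x + y * I : ℂ).re = x := by simp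
    have him : (x + y * I : ℂ).im = y := by simp
    have h := hK (x + y * I) (by rwa [hre, abs_le]) (by rwa [him]) (by rwa [him])
    rw [hre, him] at h
    rw [norm_mul, norm_qParam_one_neg, show (n * (x + y * I : ℂ)).im = n * y by simp, ← mul_assoc,
      mul_right_comm K]
    gcongr
  have hexp : Real.exp (2 * π * n * y + π / (46 * y)) =
      Real.exp (2 * π * n * y) * Real.exp (π / 46 / y) := by rw [Real.exp_add, div_div]
  calc _ ≤ ∫ x in (-(1 / 2) : ℝ)..(1 / 2),
        K * Real.exp (2 * π * n * y) * cuspMajorant (π / 46) y x :=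
        intervalIntegral.norm_integral_le_of_norm_le (by norm_num)
          (.of_forall fun x hx ↦ hbound x (Set.Ioc_subset_Icc_self hx))
          (((continuous_cuspMajorant _ hy.ne').const_mul _).intervalIntegrable _ _)
    _ ≤ K * Real.exp (2 * π * n * y) * (J * (√y ^ 3 * Real.exp (π / 46 / y))) := by
        rw [intervalIntegral.integral_const_mul]
        gcongr
        exact hJ y hy hy1
    _ = K * J * √y ^ 3 * Real.exp (2 * π * n * y + π / (46 * y)) := by rw [hexp]; ring

lemma continuous_etaProdInvPolar_horizontal {N : ℕ} (hN : 0 < N) {y : ℝ} (hy : y ≠ 0) :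
    Continuous fun x : ℝ ↦ etaProdInvPolar N (x + y * I) := by
  have hne (x : ℝ) : (N : ℂ) * (x + y * I) ≠ 0 :=
    mul_ne_zero (Nat.cast_ne_zero.2 hN.ne') fun h ↦ hy (by simpa using congrArg im h)
  unfold etaProdInvPolar Function.Periodic.qParam
  fun_prop (disch := exact hne _)

lemma exists_abs_pSigma_sub_le :
    ∃ C, 0 ≤ C ∧ ∀ (n : ℕ) (y : ℝ), 0 < n → 0 < y → y ≤ 1 →
      |(pSigma (n + 1) : ℝ) - 2 * π / (n * √23) * I2 (4 * π * √n / √23)| ≤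
        C * (√y ^ 3 * Real.exp (2 * π * n * y + π / (46 * y))) := by
  obtain ⟨C, hC⟩ := exists_norm_integral_etaProdInv_sub_polar_le
  set D := 8 * π * √23 * Real.exp (8 * π / 23)
  refine ⟨|C| + D * (8 / (π / 46) ^ 2), by positivity, fun n y hn hy hy1 ↦ ?_⟩
  have hqParam : Continuous fun x : ℝ ↦ 𝕢 1 (-(n * (x + y * I))) := by
    unfold Function.Periodic.qParam
    fun_prop
  have heta : Continuous fun x : ℝ ↦ etaProdInv 23 (x + y * I) * 𝕢 1 (-(n * (x + y * I))) :=
    (continuous_etaProdInv_horizontal (by norm_num) hy).mul hqParam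
  have hetaPolar :
      Continuous fun x : ℝ ↦ etaProdInvPolar 23 (x + y * I) * 𝕢 1 (-(n * (x + y * I))) :=
    (continuous_etaProdInvPolar_horizontal (by norm_num) hy.ne').mul hqParam
  have hsub := hC n y hy hy1
  simp_rw [sub_mul] at hsub
  rw [intervalIntegral.integral_sub (heta.intervalIntegrable _ _)
    (hetaPolar.intervalIntegrable _ _), integral_etaProdInv_mul_qParam_neg n hy] at hsub
  have hpolar := norm_integral_etaProdInvPolar_sub_le (N := 23) (by norm_num) hn hy hy1
  have htriangle := norm_add_le_of_le hsub hpolar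
  rw [sub_add_sub_cancel, ← ofReal_natCast, ← ofReal_sub, norm_real, Real.norm_eq_abs,
    Nat.cast_ofNat] at htriangle
  have hexp : Real.exp (2 * π * n * y + π / (46 * y)) =
      Real.exp (2 * π * n * y) * Real.exp (π / 46 / y) := by rw [Real.exp_add, div_div]
  have hone : 1 ≤ 8 / (π / 46) ^ 2 * √y ^ 3 * Real.exp (π / 46 / y) :=
    (Real.one_le_exp (by positivity)).trans (exp_div_two_mul_le (by positivity) hy hy1)
  calc _ ≤ C * √y ^ 3 * Real.exp (2 * π * n * y + π / (46 * y)) +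
        D * Real.exp (2 * π * n * y) * 1 := by rwa [mul_one]
    _ ≤ |C| * √y ^ 3 * Real.exp (2 * π * n * y + π / (46 * y)) + D * Real.exp (2 * π * n * y) *
        (8 / (π / 46) ^ 2 * √y ^ 3 * Real.exp (π / 46 / y)) := by
      gcongr
      exact le_abs_self C
    _ = _ := by rw [hexp]; ring

lemma exists_saddle_point {n : ℕ} (hn : 0 < n) : ∃ y : ℝ, 0 < y ∧ y ≤ 1 ∧
    2 * π * n * y + π / (46 * y) = 2 * π * √n / √23 ∧ y ^ 3 * (2 * π * √n / √23) ≤ 1 / n := by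
  have hsq : √(n : ℝ) ^ 2 = n := Real.sq_sqrt n.cast_nonneg
  have hsq23 : √(23 : ℝ) ^ 2 = 23 := Real.sq_sqrt (by norm_num)
  have hpos : 0 < √(n : ℝ) := Real.sqrt_pos.2 (by exact_mod_cast hn)
  have hn1 : 1 ≤ √(n : ℝ) := Real.one_le_sqrt.2 (by exact_mod_cast hn)
  have h231 : 1 ≤ √(23 : ℝ) := Real.one_le_sqrt.2 (by norm_num)
  -- the minimiser of the exponent on the left
  refine ⟨1 / (2 * √23 * √n), by positivity, ?_, ?_, ?_⟩
  · rw [div_le_one (by positivity)]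
    nlinarith
  · field_simp
    rw [hsq23, hsq]
    ring
  · calc (1 / (2 * √23 * √n)) ^ 3 * (2 * π * √n / √23)
        = π / 4 / (√23 ^ 2) ^ 2 * (1 / √n ^ 2) := by field_simp; norm_num
      _ ≤ 1 * (1 / (n : ℝ)) := by
        rw [hsq, hsq23]
        gcongr
        linarith [Real.pi_le_four]
      _ = 1 / (n : ℝ) := one_mul _

lemma three_le_two_mul_pi_mul_sqrt_div {n : ℕ} (hn : 23 ≤ n) : 3 ≤ 2 * π * √n / √23 := by
  have hsqrt : √23 ≤ √n := Real.sqrt_le_sqrt (by exact_mod_cast hn)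
  rw [le_div_iff₀ (by positivity)]
  gcongr
  linarith [Real.pi_gt_three]

lemma sqrt_pow_three_mul_exp_le {y X a : ℝ} (hy : 0 ≤ y) (hX : 3 ≤ X) (ha : 0 ≤ a)
    (hyX : y ^ 3 * X ≤ 1 / a) :
    √y ^ 3 * Real.exp X ≤ 16 * (a ^ (-(1 : ℝ) / 2) * I2 X) := by
  have hlower := exp_div_sqrt_le_I2 hX
  have hI2 : Real.exp X ≤ I2 X * (16 * √X) :=
    (div_le_iff₀ (mul_pos (by norm_num) (Real.sqrt_pos.2 (by linarith)))).1 hlower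
  have hI2_nonneg : 0 ≤ I2 X := hlower.trans' (by positivity)
  have hpow : √y ^ 3 * √X ≤ a ^ (-(1 : ℝ) / 2) := by
    calc √y ^ 3 * √X = √(y ^ 3 * X) := by
          rw [Real.sqrt_mul (by positivity), ← Real.sqrt_sq (by positivity : 0 ≤ √y ^ 3),
            pow_right_comm, Real.sq_sqrt hy]
      _ ≤ √(1 / a) := Real.sqrt_le_sqrt hyX
      _ = a ^ (-(1 : ℝ) / 2) := by
        rw [neg_div, Real.rpow_neg ha, ← Real.sqrt_eq_rpow, one_div, Real.sqrt_inv]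
  calc √y ^ 3 * Real.exp X ≤ √y ^ 3 * (I2 X * (16 * √X)) := by gcongr
    _ = 16 * (√y ^ 3 * √X * I2 X) := by ring
    _ ≤ 16 * (a ^ (-(1 : ℝ) / 2) * I2 X) := by gcongr

end Asymptotics

/-- **(Kim–Lee.)** As `n → ∞`,
`p_σ(n+1) = (2π/(n√23)) · I₂(4π√n/√23) + O(n^{−1/2} · I₂(2π√n/√23))`. -/
theorem kim_lee_asymptotics_pSigma :
    (fun n : ℕ =>
        (pSigma (n + 1) : ℝ) -
          2 * Real.pi / ((n : ℝ) * Real.sqrt 23) * I2 (4 * Real.pi * Real.sqrt n / Real.sqrt 23))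
      =O[atTop]
    (fun n : ℕ => (n : ℝ) ^ (-(1 : ℝ) / 2) * I2 (2 * Real.pi * Real.sqrt n / Real.sqrt 23)) := by
  obtain ⟨C, hC0, hC⟩ := exists_abs_pSigma_sub_le
  refine IsBigO.of_bound (C * 16) ?_
  filter_upwards [eventually_ge_atTop 23] with n hn
  obtain ⟨y, hy, hy1, hexponent, hcube⟩ := exists_saddle_point (n := n) (by lia)
  set X := 2 * π * √n / √23
  calc |(pSigma (n + 1) : ℝ) - 2 * π / (n * √23) * I2 (4 * π * √n / √23)|
      ≤ C * (√y ^ 3 * Real.exp X) := hexponent ▸ hC n y (by lia) hy hy1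
    _ ≤ C * (16 * ((n : ℝ) ^ (-(1 : ℝ) / 2) * I2 X)) :=
        mul_le_mul_of_nonneg_left (sqrt_pow_three_mul_exp_le hy.le
          (three_le_two_mul_pi_mul_sqrt_div hn) n.cast_nonneg hcube) hC0
    _ ≤ C * 16 * ‖(n : ℝ) ^ (-(1 : ℝ) / 2) * I2 X‖ := by
        rw [mul_assoc]
        gcongr
        exact le_abs_self _
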